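/- arXiv:1006.3690 — 6 statements merged into one kernel-verified Lean document; each statement's English description precedes it below -/
import Mathlib

section
/- Let m = 1 and suppose f is a probability density on ℝ with finite second moment ∫ x² f(x) dx < ∞. Assume that for every σ > 0, p is differentiable at σ with p'(σ) = ∫∫ min{f(y)/f(x), 1} (∂g(y|x,σ)/∂σ) f(x) dy dx, and p(σ) > 0 for all σ > 0. Then -σ·p'(σ)/p(σ) → 1 as σ → ∞; equivalently, writing c* = -1/p'(σ*) and p* = p(σ*), the ratio c*/σ* → 1/p* as σ* → ∞. (Proposition 2) -/
open MeasureTheory Real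

/-- `min{f(y)/f(x), 1}`, with the convention that this equals `1` when `f(x) = 0`. -/
noncomputable def accept {α : Type*} (f : α → ℝ) (x y : α) : ℝ :=
  if f x = 0 then 1 else min (f y / f x) 1

open Filter Topology in
lemma aux_half (f : ℝ → ℝ) (hfm : Measurable f) (hf0 : ∀ x, 0 ≤ f x)
    (h1 : Integrable (fun x => 2 * |x| * f x)) :
    Integrable (fun z : ℝ × ℝ => Set.indicator {z : ℝ × ℝ | |z.2| ≤ |z.1|} (fun z => f z.1) z)
      (volume.prod volume) := by
  have hS : MeasurableSet {z : ℝ × ℝ | |z.2| ≤ |z.1|} :=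
    measurableSet_le (by fun_prop) (by fun_prop)
  have hm : Measurable (fun z : ℝ × ℝ =>
      Set.indicator {z : ℝ × ℝ | |z.2| ≤ |z.1|} (fun z => f z.1) z) :=
    (hfm.comp measurable_fst).indicator hS
  have hsec : ∀ x : ℝ, (fun y : ℝ =>
      Set.indicator {z : ℝ × ℝ | |z.2| ≤ |z.1|} (fun z => f z.1) (x, y))
      = Set.indicator (Set.Icc (-|x|) |x|) (fun _ => f x) := by
    intro x
    ext y
    simp only [Set.indicator, Set.mem_ofPred_eq, Set.mem_Icc, ← abs_le]
  rw [integrable_prod_iff hm.aestronglyMeasurable]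
  constructor
  · refine Eventually.of_forall fun x => ?_
    rw [hsec x, integrable_indicator_iff measurableSet_Icc]
    exact integrableOn_const (by simp)
  · refine h1.congr (Eventually.of_forall fun x => ?_)
    have : (fun y : ℝ =>
      ‖Set.indicator {z : ℝ × ℝ | |z.2| ≤ |z.1|} (fun z => f z.1) (x, y)‖)
      = Set.indicator (Set.Icc (-|x|) |x|) (fun _ => f x) := by
      rw [← hsec x]
      ext y
      exact Real.norm_of_nonneg (Set.indicator_nonneg (fun z _ => hf0 z.1) _)
    simp only [this]
    rw [integral_indicator measurableSet_Icc, setIntegral_const]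
    simp [Measure.real, Real.volume_Icc]
    left
    ring

lemma aux_H (f : ℝ → ℝ) (hfm : Measurable f) (hf0 : ∀ x, 0 ≤ f x)
    (h1 : Integrable (fun x => 2 * |x| * f x)) :
    Integrable (fun z : ℝ × ℝ => min (f z.1) (f z.2)) (volume.prod volume) := by
  have ha := aux_half f hfm hf0 h1
  refine (ha.add ha.swap).mono' ?_ (Filter.Eventually.of_forall fun z => ?_)
  · exact ((hfm.comp measurable_fst).min (hfm.comp measurable_snd)).aestronglyMeasurable
  · rw [Real.norm_of_nonneg (le_min (hf0 _) (hf0 _))]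
    simp only [Pi.add_apply, Function.comp, Set.indicator, Set.mem_ofPred_eq, Prod.fst_swap,
      Prod.snd_swap]
    have := hf0 z.1
    have := hf0 z.2
    have := min_le_left (f z.1) (f z.2)
    have := min_le_right (f z.1) (f z.2)
    rcases le_total |z.2| |z.1| with h | h
    · rw [if_pos h]; split_ifs <;> linarith
    · rw [if_pos h]; split_ifs <;> linarith

lemma aux_exp (t : ℝ) : t * Real.exp (-t) ≤ 1 := by
  rw [Real.exp_neg, ← div_eq_mul_inv, div_le_one (Real.exp_pos t)]
  linarith [Real.add_one_le_exp t]

/-- Proposition 2: for `m = 1`, a Gaussian proposal `N(x, σ²A)` and a target density `f`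
with finite second moment, `-σ p'(σ)/p(σ) → 1` as `σ → ∞`
(equivalently, `c*/σ* = (-1/p'(σ*))/σ* → 1/p*` as `σ* → ∞`). -/
theorem prop2 (A : ℝ) (hA : 0 < A)
    (f : ℝ → ℝ) (hfm : Measurable f) (hf0 : ∀ x, 0 ≤ f x) (hf1 : ∫ x, f x = 1)
    -- finite second moment `∫ x² f(x) dx < ∞`
    (hM : Integrable (fun x => x ^ 2 * f x))
    (g : ℝ → ℝ → ℝ → ℝ)
    (hg : ∀ x y σ : ℝ, g x y σ = (2 * π * σ ^ 2) ^ (-(1 : ℝ) / 2) * A ^ (-(1 : ℝ) / 2) *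
        Real.exp (-(y - x) ^ 2 / (2 * A * σ ^ 2)))
    (p : ℝ → ℝ)
    (hp : ∀ σ : ℝ, p σ = ∫ x, ∫ y, accept f x y * g x y σ * f x)
    -- differentiation under the integral sign at every `σ > 0`
    (hderiv : ∀ σ : ℝ, 0 < σ →
        HasDerivAt p (∫ x, ∫ y, accept f x y * deriv (g x y) σ * f x) σ)
    (hppos : ∀ σ : ℝ, 0 < σ → 0 < p σ) :
    Filter.Tendsto (fun σ => -σ * deriv p σ / p σ) Filter.atTop (nhds 1) := by
  have hfi : Integrable f := by
    by_contra h
    rw [integral_undef h] at hf1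
    norm_num at hf1
  have h1 : Integrable (fun x => 2 * |x| * f x) := by
    refine (hfi.add hM).mono' (by fun_prop) (Filter.Eventually.of_forall fun x => ?_)
    rw [Real.norm_of_nonneg (mul_nonneg (by positivity) (hf0 x))]
    simp only [Pi.add_apply]
    have h2 : 2 * |x| ≤ 1 + x ^ 2 := by nlinarith [sq_nonneg (|x| - 1), sq_abs x]
    nlinarith [mul_le_mul_of_nonneg_right h2 (hf0 x)]
  have hH := aux_H f hfm hf0 h1
  have hmin0 : ∀ z : ℝ × ℝ, 0 ≤ min (f z.1) (f z.2) := fun z => le_min (hf0 _) (hf0 _)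
  have hacc : ∀ x y c : ℝ, accept f x y * c * f x = min (f x) (f y) * c := by
    intro x y c
    unfold accept
    split_ifs with h
    · simp [h, hf0 y]
    · have hx : 0 < f x := lt_of_le_of_ne (hf0 x) (Ne.symm h)
      have : min (f y / f x) 1 * f x = min (f x) (f y) := by
        rw [min_mul_of_nonneg _ _ hx.le, div_mul_cancel₀ _ h, one_mul, min_comm]
      rw [← this]; ring
  -- the exponent
  set T : ℝ → ℝ × ℝ → ℝ := fun σ z => (z.2 - z.1) ^ 2 / (2 * A * σ ^ 2) with hT
  have hT0 : ∀ σ z, 0 ≤ T σ z := fun σ z => by simp only [hT]; positivity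
  have hTm : ∀ σ, Measurable (T σ) := fun σ => by simp only [hT]; fun_prop
  have hTl : ∀ z, Filter.Tendsto (fun σ => T σ z) Filter.atTop (nhds 0) := by
    intro z
    refine Filter.Tendsto.const_div_atTop ?_ _
    exact Filter.Tendsto.const_mul_atTop (by positivity) (Filter.tendsto_pow_atTop (by norm_num))
  have hHm := hH.aestronglyMeasurable
  have hE1 : ∀ σ z, Real.exp (-T σ z) ≤ 1 := fun σ z => by
    rw [Real.exp_le_one_iff]; linarith [hT0 σ z]
  have hTE1 : ∀ σ z, T σ z * Real.exp (-T σ z) ≤ 1 := fun σ z => aux_exp _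
  have hb0 : ∀ σ, ∀ z : ℝ × ℝ,
      ‖min (f z.1) (f z.2) * Real.exp (-T σ z)‖ ≤ min (f z.1) (f z.2) := by
    intro σ z
    rw [Real.norm_of_nonneg (mul_nonneg (hmin0 z) (Real.exp_pos _).le)]
    exact mul_le_of_le_one_right (hmin0 z) (hE1 σ z)
  have hb2 : ∀ σ, ∀ z : ℝ × ℝ,
      ‖min (f z.1) (f z.2) * (T σ z * Real.exp (-T σ z))‖ ≤ min (f z.1) (f z.2) := by
    intro σ z
    rw [Real.norm_of_nonneg (mul_nonneg (hmin0 z) (mul_nonneg (hT0 σ z) (Real.exp_pos _).le))]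
    exact mul_le_of_le_one_right (hmin0 z) (hTE1 σ z)
  have hm0 : ∀ σ, AEStronglyMeasurable
      (fun z : ℝ × ℝ => min (f z.1) (f z.2) * Real.exp (-T σ z)) (volume.prod volume) :=
    fun σ => hHm.mul (Real.measurable_exp.comp (hTm σ).neg).aestronglyMeasurable
  have hm2 : ∀ σ, AEStronglyMeasurable
      (fun z : ℝ × ℝ => min (f z.1) (f z.2) * (T σ z * Real.exp (-T σ z)))
      (volume.prod volume) :=
    fun σ => hHm.mul
      ((hTm σ).mul (Real.measurable_exp.comp (hTm σ).neg)).aestronglyMeasurable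
  have hi0 : ∀ σ, Integrable
      (fun z : ℝ × ℝ => min (f z.1) (f z.2) * Real.exp (-T σ z)) (volume.prod volume) :=
    fun σ => hH.mono' (hm0 σ) (Filter.Eventually.of_forall (hb0 σ))
  have hi2 : ∀ σ, Integrable
      (fun z : ℝ × ℝ => min (f z.1) (f z.2) * (T σ z * Real.exp (-T σ z)))
      (volume.prod volume) :=
    fun σ => hH.mono' (hm2 σ) (Filter.Eventually.of_forall (hb2 σ))
  set I0 : ℝ → ℝ := fun σ => ∫ z : ℝ × ℝ, min (f z.1) (f z.2) * Real.exp (-T σ z)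
    ∂(volume.prod volume) with hI0
  set I2 : ℝ → ℝ := fun σ => ∫ z : ℝ × ℝ, min (f z.1) (f z.2) * (T σ z * Real.exp (-T σ z))
    ∂(volume.prod volume) with hI2
  have hEl : ∀ z, Filter.Tendsto (fun σ => Real.exp (-T σ z)) Filter.atTop (nhds 1) := by
    intro z
    have := (Real.continuous_exp.tendsto _).comp (hTl z).neg
    simpa [Function.comp_def] using this
  have hL0 : Filter.Tendsto I0 Filter.atTop
      (nhds (∫ z : ℝ × ℝ, min (f z.1) (f z.2) ∂(volume.prod volume))) := by
    refine tendsto_integral_filter_of_dominated_convergence _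
      (Filter.Eventually.of_forall hm0)
      (Filter.Eventually.of_forall fun σ => Filter.Eventually.of_forall (hb0 σ)) hH
      (Filter.Eventually.of_forall fun z => ?_)
    simpa using (hEl z).const_mul (min (f z.1) (f z.2))
  have hL2 : Filter.Tendsto I2 Filter.atTop (nhds 0) := by
    have h0 : (0 : ℝ) = ∫ z : ℝ × ℝ, (0 : ℝ) ∂(volume.prod volume) := by simp
    rw [h0]
    refine tendsto_integral_filter_of_dominated_convergence _
      (Filter.Eventually.of_forall hm2)
      (Filter.Eventually.of_forall fun σ => Filter.Eventually.of_forall (hb2 σ)) hH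
      (Filter.Eventually.of_forall fun z => ?_)
    simpa using ((hTl z).mul (hEl z)).const_mul (min (f z.1) (f z.2))
  set c : ℝ := (2 * π) ^ (-(1 : ℝ) / 2) * A ^ (-(1 : ℝ) / 2) with hc
  have hcpos : 0 < c := by positivity
  have hg' : ∀ x y σ : ℝ, 0 < σ → g x y σ = c * (σ⁻¹ * Real.exp (-T σ (x, y))) := by
    intro x y σ hσ
    have e1 : (2 * π * σ ^ 2) ^ (-(1 : ℝ) / 2) = (2 * π) ^ (-(1 : ℝ) / 2) * σ⁻¹ := by
      rw [Real.mul_rpow (by positivity) (by positivity), ← Real.rpow_natCast σ 2,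
        ← Real.rpow_mul hσ.le]
      norm_num
      left
      exact Real.rpow_neg_one σ
    rw [hg, e1, hc]
    simp only [hT]
    rw [neg_div]
    ring
  have hdg : ∀ x y σ : ℝ, 0 < σ → deriv (g x y) σ =
      c * (σ ^ 2)⁻¹ * (2 * (T σ (x, y) * Real.exp (-T σ (x, y))) - Real.exp (-T σ (x, y))) := by
    intro x y σ hσ
    have hTd : HasDerivAt (fun s => T s (x, y)) (-(2 * T σ (x, y) / σ)) σ := by
      have h := ((hasDerivAt_pow 2 σ).const_mul (2 * A)).fun_inv (by positivity)
      have h := h.const_mul ((y - x) ^ 2)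
      simp only [hT, div_eq_mul_inv]
      refine h.congr_deriv ?_
      have := hσ.ne'
      have := hA.ne'
      norm_num
      field_simp
    have h := (((hasDerivAt_inv hσ.ne').mul hTd.fun_neg.exp).const_mul c)
    have hev : g x y =ᶠ[nhds σ] fun s => c * (s⁻¹ * Real.exp (-T s (x, y))) := by
      filter_upwards [lt_mem_nhds hσ] with s hs using hg' x y s hs
    rw [hev.deriv_eq]
    refine Eq.trans (HasDerivAt.deriv h) ?_
    field_simp
    ring
  have hpI : ∀ σ, 0 < σ → p σ = c * σ⁻¹ * I0 σ := by
    intro σ hσ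
    rw [hp, hI0]
    simp only
    rw [← integral_const_mul, integral_prod _ ((hi0 σ).const_mul _)]
    refine integral_congr_ae (Filter.Eventually.of_forall fun x => ?_)
    refine integral_congr_ae (Filter.Eventually.of_forall fun y => ?_)
    simp only
    rw [hacc, hg' x y σ hσ]
    ring
  have hdp : ∀ σ, 0 < σ → deriv p σ = c * (σ ^ 2)⁻¹ * (2 * I2 σ - I0 σ) := by
    intro σ hσ
    rw [(hderiv σ hσ).deriv, hI0, hI2]
    simp only
    rw [← integral_const_mul, ← integral_sub ((hi2 σ).const_mul _) (hi0 σ),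
      ← integral_const_mul, integral_prod]
    swap
    · exact (((hi2 σ).const_mul 2).sub (hi0 σ)).const_mul _
    refine integral_congr_ae (Filter.Eventually.of_forall fun x => ?_)
    refine integral_congr_ae (Filter.Eventually.of_forall fun y => ?_)
    simp only
    rw [hacc, hdg x y σ hσ]
    ring
  have hI0pos : ∀ σ, 0 < σ → 0 < I0 σ := by
    intro σ hσ
    have h := hppos σ hσ
    rw [hpI σ hσ] at h
    exact pos_of_mul_pos_right h (by positivity)
  have hLpos : 0 < ∫ z : ℝ × ℝ, min (f z.1) (f z.2) ∂(volume.prod volume) := by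
    refine (hI0pos 1 one_pos).trans_le (integral_mono (hi0 1) hH fun z => ?_)
    exact mul_le_of_le_one_right (hmin0 z) (hE1 1 z)
  have hlim : Filter.Tendsto (fun σ => 1 - 2 * (I2 σ / I0 σ)) Filter.atTop (nhds 1) := by
    have := ((hL2.div hL0 hLpos.ne').const_mul 2).const_sub 1
    simpa using this
  refine hlim.congr' ?_
  filter_upwards [Filter.eventually_gt_atTop 0] with σ hσ
  rw [hpI σ hσ, hdp σ hσ]
  have := (hI0pos σ hσ).ne'
  field_simp
  ring
end

section
/- Let x ∈ ℝ^m and λ ∈ ℝ^m be fixed vectors, and define the half-space R = {y ∈ ℝ^m : λᵀ(y - x) ≤ 0}. Then for every σ > 0, ∫_R λᵀ(y - x) (∂g(y|x,σ)/∂σ) dy = σ^{-1} ∫_R λᵀ(y - x) g(y|x,σ) dy. (Appendix preliminary lemma) -/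
open MeasureTheory Real Matrix

/-- The density of the multivariate normal distribution with mean `x` and covariance `σ² A`. -/
noncomputable def gaussDensity (m : ℕ) (A : Matrix (Fin m) (Fin m) ℝ)
    (x y : Fin m → ℝ) (σ : ℝ) : ℝ :=
  (2 * π * σ ^ 2) ^ (-(m : ℝ) / 2) * A.det ^ (-(1 : ℝ) / 2) *
    Real.exp (-((y - x) ⬝ᵥ (A⁻¹).mulVec (y - x)) / (2 * σ ^ 2))

lemma hsl_lower (m : ℕ) (B : Matrix (Fin m) (Fin m) ℝ) (hB : B.PosDef) :
    ∃ c : ℝ, 0 < c ∧ ∀ z : Fin m → ℝ, c * ‖z‖ ^ 2 ≤ z ⬝ᵥ B.mulVec z := by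
  have hpos : ∀ z : Fin m → ℝ, z ≠ 0 → 0 < z ⬝ᵥ B.mulVec z := by
    intro z hz
    simpa using hB.dotProduct_mulVec_pos hz
  have hcont : Continuous (fun z : Fin m → ℝ => z ⬝ᵥ B.mulVec z) := by fun_prop
  have hcomp : IsCompact (Metric.sphere (0 : Fin m → ℝ) 1) := isCompact_sphere _ _
  rcases (Metric.sphere (0 : Fin m → ℝ) 1).eq_empty_or_nonempty with he | hne
  · refine ⟨1, one_pos, fun z => ?_⟩
    by_cases hz : z = 0
    · simp [hz]
    · exfalso
      have : (‖z‖⁻¹ • z) ∈ Metric.sphere (0 : Fin m → ℝ) 1 := by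
        simp [norm_smul, hz]
      rw [he] at this
      exact this
  · obtain ⟨z0, hz0, hmin⟩ := hcomp.exists_isMinOn hne hcont.continuousOn
    have hz0' : z0 ≠ 0 := by
      rintro rfl
      simp at hz0
    refine ⟨_, hpos z0 hz0', fun z => ?_⟩
    by_cases hz : z = 0
    · simp [hz]
    · have hmem : (‖z‖⁻¹ • z) ∈ Metric.sphere (0 : Fin m → ℝ) 1 := by
        simp [norm_smul, hz]
      have h1 := hmin hmem
      simp only [Set.mem_ofPred_eq, mulVec_smul, smul_dotProduct, dotProduct_smul, smul_eq_mul] at h1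
      have hn : 0 < ‖z‖ := norm_pos_iff.2 hz
      calc _ ≤ (‖z‖⁻¹ * (‖z‖⁻¹ * z ⬝ᵥ B.mulVec z)) * ‖z‖ ^ 2 := by gcongr
        _ = _ := by field_simp

lemma hsl_int (m : ℕ) (c : ℝ) (hc : 0 < c) :
    Integrable (fun z : Fin m → ℝ => Real.exp (-(c * ‖z‖ ^ 2))) := by
  have hd : 0 < c / (m + 1) := by positivity
  have h1 : Integrable (fun z : Fin m → ℝ => ∏ i, Real.exp (-(c / (m + 1)) * z i ^ 2)) :=
    Integrable.fintype_prod (f := fun _ : Fin m => fun t : ℝ => Real.exp (-(c / (m + 1)) * t ^ 2))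
      (fun i => integrable_exp_neg_mul_sq hd)
  refine h1.mono' (by fun_prop) (Filter.Eventually.of_forall fun z => ?_)
  rw [← Real.exp_sum, Real.norm_eq_abs, Real.abs_exp, Real.exp_le_exp, ← Finset.mul_sum]
  have h2 : ∑ i, z i ^ 2 ≤ (m + 1) * ‖z‖ ^ 2 := by
    calc ∑ i, z i ^ 2 ≤ ∑ i : Fin m, ‖z‖ ^ 2 := by
          refine Finset.sum_le_sum fun i _ => ?_
          rw [← sq_abs]
          have := norm_le_pi_norm z i
          rw [Real.norm_eq_abs] at this
          gcongr
      _ = m * ‖z‖ ^ 2 := by simp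
      _ ≤ _ := by nlinarith [sq_nonneg ‖z‖]
  have h3 : c / (m + 1) * ∑ i, z i ^ 2 ≤ c / (m + 1) * ((m + 1) * ‖z‖ ^ 2) := by gcongr
  have h4 : c / (m + 1) * ((m + 1) * ‖z‖ ^ 2) = c * ‖z‖ ^ 2 := by field_simp
  linarith

section
variable {m : ℕ} {q h : (Fin m → ℝ) → ℝ}

lemma hsl_bound {c C t : ℝ} (hc : 0 < c) (hC : 0 ≤ C) (ht : 0 < t)
    (hq : Continuous q) (hh : Continuous h)
    (hqc : ∀ z, c * ‖z‖ ^ 2 ≤ q z) (hhC : ∀ z, |h z| ≤ C * ‖z‖) :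
    Integrable (fun z => h z * Real.exp (-(t * q z))) ∧
    Integrable (fun z => h z * (q z * Real.exp (-(t * q z)))) := by
  have key : ∀ t : ℝ, 0 < t → Integrable (fun z => h z * Real.exp (-(t * q z))) := by
    intro t ht
    have hd : 0 < t * c / 2 := by positivity
    refine ((hsl_int m (t * c / 2) hd).const_mul (C * (1 + 1 / (t * c / 2)))).mono'
      (by fun_prop) (Filter.Eventually.of_forall fun z => ?_)
    rw [norm_mul, Real.norm_eq_abs, Real.norm_eq_abs, Real.abs_exp]
    set d := t * c / 2 with hdd
    have e1 : Real.exp (-(t * q z)) ≤ Real.exp (-(d * ‖z‖ ^ 2)) * Real.exp (-(d * ‖z‖ ^ 2)) := by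
      rw [← Real.exp_add, Real.exp_le_exp]
      have := mul_le_mul_of_nonneg_left (hqc z) ht.le
      rw [hdd]; nlinarith
    have e2 : ‖z‖ * Real.exp (-(d * ‖z‖ ^ 2)) ≤ 1 + 1 / d := by
      rw [Real.exp_neg, ← div_eq_mul_inv, div_le_iff₀ (Real.exp_pos _)]
      have h1 := Real.add_one_le_exp (d * ‖z‖ ^ 2)
      have h2 : ‖z‖ ≤ 1 + ‖z‖ ^ 2 := by nlinarith [sq_nonneg (‖z‖ - 1), norm_nonneg z]
      have h3 : (1 + 1 / d) * (d * ‖z‖ ^ 2 + 1) ≤ (1 + 1 / d) * Real.exp (d * ‖z‖ ^ 2) := by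
        gcongr
      have h4 : (1 + 1 / d) * (d * ‖z‖ ^ 2 + 1) = d * ‖z‖ ^ 2 + 1 + ‖z‖ ^ 2 + 1 / d := by
        field_simp
        ring
      have h5 : 0 < 1 / d := by positivity
      have h6 : 0 ≤ d * ‖z‖ ^ 2 := by positivity
      linarith
    calc |h z| * Real.exp (-(t * q z))
        ≤ (C * ‖z‖) * (Real.exp (-(d * ‖z‖ ^ 2)) * Real.exp (-(d * ‖z‖ ^ 2))) :=
          mul_le_mul (hhC z) e1 (Real.exp_pos _).le (by positivity)
      _ = C * (‖z‖ * Real.exp (-(d * ‖z‖ ^ 2))) * Real.exp (-(d * ‖z‖ ^ 2)) := by ring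
      _ ≤ _ := by gcongr
  refine ⟨key t ht, ?_⟩
  refine ((key (t / 2) (by positivity)).norm.const_mul (2 / t)).mono'
      (by fun_prop) (Filter.Eventually.of_forall fun z => ?_)
  have hq0 : 0 ≤ q z := le_trans (by positivity) (hqc z)
  simp only [norm_mul, Real.norm_eq_abs, Real.abs_exp, abs_of_nonneg hq0]
  have e1 : Real.exp (-(t * q z)) = Real.exp (-(t / 2 * q z)) * Real.exp (-(t / 2 * q z)) := by
    rw [← Real.exp_add]; congr 1; ring
  have e2 : q z * Real.exp (-(t / 2 * q z)) ≤ 2 / t := by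
    rw [Real.exp_neg, ← div_eq_mul_inv, div_le_iff₀ (Real.exp_pos _)]
    have h1 := Real.add_one_le_exp (t / 2 * q z)
    calc q z = 2 / t * (t / 2 * q z) := by field_simp
      _ ≤ _ := by gcongr; linarith
  rw [e1]
  calc |h z| * (q z * (Real.exp (-(t / 2 * q z)) * Real.exp (-(t / 2 * q z))))
      = (q z * Real.exp (-(t / 2 * q z))) * (|h z| * Real.exp (-(t / 2 * q z))) := by ring
    _ ≤ _ := by gcongr

lemma hsl_scale {t : ℝ} (ht : 0 < t)
    (hqs : ∀ (r : ℝ) z, q (r • z) = r ^ 2 * q z) (hhs : ∀ (r : ℝ) z, 0 < r → h (r • z) = r * h z) :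
    ∫ z, h z * Real.exp (-(t * q z))
      = t ^ (-((m : ℝ) + 1) / 2) * ∫ z, h z * Real.exp (-(1 * q z)) := by
  have hr : 0 < √t := Real.sqrt_pos.2 ht
  have h1 := Measure.integral_comp_smul (volume : Measure (Fin m → ℝ))
    (fun z => h z * Real.exp (-(1 * q z))) (√t)
  simp only [hqs, hhs _ _ hr, Real.sq_sqrt ht.le, one_mul, mul_assoc, integral_const_mul,
    Module.finrank_fin_fun, smul_eq_mul] at h1
  rw [abs_of_pos (by positivity)] at h1
  have h2 : t ^ (-((m : ℝ) + 1) / 2) = (√t)⁻¹ * (√t ^ m)⁻¹ := by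
    rw [← mul_inv, ← pow_succ', Real.sqrt_eq_rpow, ← Real.rpow_natCast, ← Real.rpow_mul ht.le,
      ← Real.rpow_neg ht.le]
    congr 1; push_cast; ring
  simp only [one_mul]
  rw [h2, mul_assoc, ← h1]
  field_simp

lemma hsl_main {c C t : ℝ} (hc : 0 < c) (hC : 0 ≤ C) (ht : 0 < t)
    (hq : Continuous q) (hh : Continuous h)
    (hqc : ∀ z, c * ‖z‖ ^ 2 ≤ q z) (hhC : ∀ z, |h z| ≤ C * ‖z‖)
    (hqs : ∀ (r : ℝ) z, q (r • z) = r ^ 2 * q z) (hhs : ∀ (r : ℝ) z, 0 < r → h (r • z) = r * h z) :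
    ∫ z, h z * (q z * Real.exp (-(t * q z)))
      = ((m : ℝ) + 1) / (2 * t) * ∫ z, h z * Real.exp (-(t * q z)) := by
  have hI := fun s (hs : 0 < s) => hsl_bound hc hC hs hq hh hqc hhC
  have hq0 : ∀ z, 0 ≤ q z := fun z => le_trans (by positivity) (hqc z)
  have hnb : Set.Ioi (t / 2) ∈ nhds t := Ioi_mem_nhds (by linarith)
  have hD := (hasDerivAt_integral_of_dominated_loc_of_deriv_le (μ := (volume : Measure (Fin m → ℝ)))
    (F := fun s z => h z * Real.exp (-(s * q z)))
    (F' := fun s z => -(h z * (q z * Real.exp (-(s * q z)))))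
    (bound := fun z => ‖h z * (q z * Real.exp (-(t / 2 * q z)))‖) (x₀ := t) hnb
    (Filter.Eventually.of_forall fun s => by fun_prop)
    (hI t ht).1 (by fun_prop)
    (Filter.Eventually.of_forall fun z s hs => by
      simp only [norm_neg, norm_mul, Real.norm_eq_abs, Real.abs_exp]
      have := hq0 z
      have hs' : t / 2 ≤ s := le_of_lt hs
      gcongr)
    (hI (t / 2) (by positivity)).2.norm
    (Filter.Eventually.of_forall fun z s hs => by
      have h1 : HasDerivAt (fun s : ℝ => -(s * q z)) (-(1 * q z)) s :=
        ((hasDerivAt_id s).mul_const (q z)).neg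
      have h2 := (h1.exp).const_mul (h z)
      refine h2.congr_deriv ?_
      ring)).2
  have hE : (fun s => ∫ z, h z * Real.exp (-(s * q z))) =ᶠ[nhds t]
      fun s => s ^ (-((m : ℝ) + 1) / 2) * ∫ z, h z * Real.exp (-(1 * q z)) := by
    filter_upwards [hnb] with s hs
    exact hsl_scale (lt_trans (by positivity) hs) hqs hhs
  have hD2 := ((Real.hasDerivAt_rpow_const (x := t) (p := -((m : ℝ) + 1) / 2)
    (Or.inl ht.ne')).mul_const (∫ z, h z * Real.exp (-(1 * q z)))).congr_of_eventuallyEq hE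
  have hu := hD.unique hD2
  rw [integral_neg] at hu
  rw [hsl_scale ht hqs hhs]
  rw [Real.rpow_sub_one ht.ne'] at hu
  rw [← neg_inj, hu]
  field_simp

end

theorem halfspace_lemma (m : ℕ) (A : Matrix (Fin m) (Fin m) ℝ) (hA : A.PosDef)
    (x lam : Fin m → ℝ) (σ : ℝ) (hσ : 0 < σ) :
    ∫ y in {y : Fin m → ℝ | lam ⬝ᵥ (y - x) ≤ 0},
        (lam ⬝ᵥ (y - x)) * deriv (fun s => gaussDensity m A x y s) σ
      = σ⁻¹ * ∫ y in {y : Fin m → ℝ | lam ⬝ᵥ (y - x) ≤ 0},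
          (lam ⬝ᵥ (y - x)) * gaussDensity m A x y σ := by
  obtain ⟨c, hc, hqc⟩ := hsl_lower m A⁻¹ hA.inv
  set q : (Fin m → ℝ) → ℝ := fun z => z ⬝ᵥ (A⁻¹).mulVec z with hqdef
  set h : (Fin m → ℝ) → ℝ := fun z => min (lam ⬝ᵥ z) 0 with hhdef
  have hq : Continuous q := by simp only [hqdef]; fun_prop
  have hh : Continuous h := by simp only [hhdef]; fun_prop
  have hqs : ∀ (r : ℝ) z, q (r • z) = r ^ 2 * q z := by
    intro r z
    simp only [hqdef, mulVec_smul, smul_dotProduct, dotProduct_smul, smul_eq_mul]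
    ring
  have hhs : ∀ (r : ℝ) z, 0 < r → h (r • z) = r * h z := by
    intro r z hr
    simp only [hhdef, dotProduct_smul, smul_eq_mul]
    rw [mul_min_of_nonneg _ _ hr.le, mul_zero]
  have hhC : ∀ z, |h z| ≤ (∑ i, |lam i|) * ‖z‖ := by
    intro z
    have h1 : |h z| ≤ |lam ⬝ᵥ z| := by
      simp only [hhdef]
      rcases le_total (lam ⬝ᵥ z) 0 with h0 | h0
      · rw [min_eq_left h0]
      · rw [min_eq_right h0]; simp
    refine h1.trans ?_
    rw [dotProduct, Finset.sum_mul]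
    refine (Finset.abs_sum_le_sum_abs _ _).trans (Finset.sum_le_sum fun i _ => ?_)
    rw [abs_mul]
    have := norm_le_pi_norm z i
    rw [Real.norm_eq_abs] at this
    gcongr
  have hC : 0 ≤ ∑ i, |lam i| := Finset.sum_nonneg fun i _ => abs_nonneg _
  have hred : ∀ f : (Fin m → ℝ) → ℝ,
      ∫ y in {y : Fin m → ℝ | lam ⬝ᵥ (y - x) ≤ 0}, (lam ⬝ᵥ (y - x)) * f (y - x)
        = ∫ z, h z * f z := by
    intro f
    have hms : MeasurableSet {y : Fin m → ℝ | lam ⬝ᵥ (y - x) ≤ 0} :=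
      (isClosed_le (by fun_prop) continuous_const).measurableSet
    rw [← integral_indicator hms, ← integral_sub_right_eq_self (fun z => h z * f z) x]
    congr 1
    ext y
    simp only [Set.indicator_apply, Set.mem_ofPred_eq, hhdef]
    split_ifs with h0
    · rw [min_eq_left h0]
    · rw [min_eq_right (le_of_not_ge h0), zero_mul]
  set t : ℝ := 1 / (2 * σ ^ 2) with htdef
  have ht : 0 < t := by positivity
  set K : ℝ := (2 * π * σ ^ 2) ^ (-(m : ℝ) / 2) * A.det ^ (-(1 : ℝ) / 2) with hK
  have hg : ∀ y, gaussDensity m A x y σ = K * Real.exp (-(t * q (y - x))) := by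
    intro y
    rw [gaussDensity, hK, htdef]
    congr 2
    simp only [hqdef]
    ring
  have hd : ∀ y, deriv (fun s => gaussDensity m A x y s) σ
      = K * (-m / σ) * Real.exp (-(t * q (y - x)))
        + K * (1 / σ ^ 3) * (q (y - x) * Real.exp (-(t * q (y - x)))) := by
    intro y
    have hp : 0 < 2 * π * σ ^ 2 := by positivity
    have h1 : HasDerivAt (fun s : ℝ => 2 * π * s ^ 2) (2 * π * (2 * σ)) σ := by
      simpa using (hasDerivAt_pow 2 σ).const_mul (2 * π)
    have h2 := (h1.rpow_const (p := -(m : ℝ) / 2) (Or.inl hp.ne')).mul_const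
      (A.det ^ (-(1 : ℝ) / 2))
    have h3 : HasDerivAt (fun s : ℝ => -(q (y - x)) / (2 * s ^ 2)) (q (y - x) / σ ^ 3) σ := by
      have h4 : HasDerivAt (fun s : ℝ => 2 * s ^ 2) (2 * (2 * σ)) σ := by
        simpa using (hasDerivAt_pow 2 σ).const_mul 2
      have h5 := (hasDerivAt_const σ (-(q (y - x)))).div h4 (by positivity)
      refine HasDerivAt.congr_deriv h5 ?_
      field_simp
      ring
    have h6 := (h2.mul h3.exp).deriv
    have h7 : -(q (y - x)) / (2 * σ ^ 2) = -(t * q (y - x)) := by rw [htdef]; ring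
    rw [h7, Real.rpow_sub_one hp.ne'] at h6
    refine Eq.trans h6 ?_
    rw [hK]
    field_simp
  simp only [hg, hd]
  rw [hred (fun z => K * (-m / σ) * Real.exp (-(t * q z))
        + K * (1 / σ ^ 3) * (q z * Real.exp (-(t * q z)))),
    hred (fun z => K * Real.exp (-(t * q z)))]
  obtain ⟨i1, i2⟩ := hsl_bound hc hC ht hq hh hqc hhC
  have e1 : ∀ z, h z * (K * (-m / σ) * Real.exp (-(t * q z))
        + K * (1 / σ ^ 3) * (q z * Real.exp (-(t * q z))))
      = K * (-m / σ) * (h z * Real.exp (-(t * q z)))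
        + K * (1 / σ ^ 3) * (h z * (q z * Real.exp (-(t * q z)))) := fun z => by ring
  have e2 : ∀ z, h z * (K * Real.exp (-(t * q z))) = K * (h z * Real.exp (-(t * q z))) :=
    fun z => by ring
  simp only [e1, e2]
  rw [integral_add (i1.const_mul _) (i2.const_mul _), integral_const_mul, integral_const_mul,
    integral_const_mul, hsl_main hc hC ht hq hh hqc hhC hqs hhs, htdef]
  field_simp
  ring
end

section
/- Suppose p is differentiable at σ > 0 with p'(σ) = ∫∫ min{f(y)/f(x), 1} (∂g(y|x,σ)/∂σ) f(x) dy dx (differentiation under the integral sign), and the integral defining φ(σ) is finite. Then p'(σ) = -m·p(σ)/σ + φ(σ). (Equation (3)) -/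
open MeasureTheory Real Matrix

lemma quad_lb (m : ℕ) (B : Matrix (Fin m) (Fin m) ℝ) (hB : B.PosDef) :
    ∃ c : ℝ, 0 < c ∧ ∀ z : Fin m → ℝ, c * ∑ i, z i ^ 2 ≤ z ⬝ᵥ B.mulVec z := by
  have hQc : Continuous (fun z : Fin m → ℝ => z ⬝ᵥ B.mulVec z) := by
    simp only [dotProduct, mulVec]; fun_prop
  have hsc : IsCompact {z : Fin m → ℝ | ∑ i, z i ^ 2 = 1} := by
    apply (isCompact_closedBall (0 : Fin m → ℝ) 1).of_isClosed_subset
    · exact isClosed_eq (by fun_prop) continuous_const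
    · intro z hz
      simp only [Set.mem_ofPred_eq] at hz
      rw [mem_closedBall_zero_iff, pi_norm_le_iff_of_nonneg zero_le_one]
      intro i
      have := Finset.single_le_sum (f := fun i => z i ^ 2) (fun i _ => sq_nonneg _) (Finset.mem_univ i)
      rw [Real.norm_eq_abs]
      exact abs_le_one_iff_mul_self_le_one.2 (by nlinarith)
  rcases Set.eq_empty_or_nonempty {z : Fin m → ℝ | ∑ i, z i ^ 2 = 1} with he | hne
  · refine ⟨1, one_pos, fun z => ?_⟩
    by_contra hcon
    have hz : z ≠ 0 := by rintro rfl; simp at hcon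
    have hs : 0 < ∑ i, z i ^ 2 := by
      obtain ⟨i, hi⟩ := Function.ne_iff.1 hz
      exact Finset.sum_pos' (fun i _ => sq_nonneg _) ⟨i, Finset.mem_univ i, by have : z i ≠ 0 := hi; positivity⟩
    have : (√(∑ i, z i ^ 2))⁻¹ • z ∈ {z : Fin m → ℝ | ∑ i, z i ^ 2 = 1} := by
      simp only [Set.mem_ofPred_eq, Pi.smul_apply, smul_eq_mul, mul_pow, ← Finset.mul_sum, inv_pow]
      rw [Real.sq_sqrt hs.le, inv_mul_cancel₀ hs.ne']
    rw [he] at this; exact this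
  · obtain ⟨w, hw, hmin⟩ := hsc.exists_isMinOn hne hQc.continuousOn
    have hpos : ∀ z : Fin m → ℝ, z ≠ 0 → 0 < z ⬝ᵥ B.mulVec z := fun z hz => by
      simpa using hB.dotProduct_mulVec_pos hz
    refine ⟨w ⬝ᵥ B.mulVec w, hpos w (by rintro rfl; simp at hw), fun z => ?_⟩
    by_cases hz : z = 0
    · subst hz; simp
    have hs : 0 < ∑ i, z i ^ 2 := by
      obtain ⟨i, hi⟩ := Function.ne_iff.1 hz
      exact Finset.sum_pos' (fun i _ => sq_nonneg _) ⟨i, Finset.mem_univ i, by have : z i ≠ 0 := hi; positivity⟩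
    have : (√(∑ i, z i ^ 2))⁻¹ • z ∈ {z : Fin m → ℝ | ∑ i, z i ^ 2 = 1} := by
      simp only [Set.mem_ofPred_eq, Pi.smul_apply, smul_eq_mul, mul_pow, ← Finset.mul_sum, inv_pow]
      rw [Real.sq_sqrt hs.le, inv_mul_cancel₀ hs.ne']
    have h2 := isMinOn_iff.1 hmin _ this
    simp only [mulVec_smul, smul_dotProduct, dotProduct_smul, smul_eq_mul] at h2
    rw [← mul_assoc, ← mul_inv, Real.mul_self_sqrt hs.le, inv_mul_eq_div, le_div_iff₀ hs] at h2
    exact h2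

lemma gauss_int (m : ℕ) (B : Matrix (Fin m) (Fin m) ℝ) (hB : B.PosDef) (t : ℝ) (ht : 0 < t) :
    Integrable (fun z : Fin m → ℝ => Real.exp (-(z ⬝ᵥ B.mulVec z) / t)) := by
  obtain ⟨c, hc, h⟩ := quad_lb m B hB
  have h1 : Integrable (fun z : Fin m → ℝ => ∏ i, Real.exp (-(c / t) * z i ^ 2)) :=
    Integrable.fintype_prod (f := fun (_ : Fin m) (x : ℝ) => Real.exp (-(c / t) * x ^ 2)) (fun _ => integrable_exp_neg_mul_sq (by positivity))
  refine h1.mono' ?_ (ae_of_all _ fun z => ?_)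
  · apply Continuous.aestronglyMeasurable
    simp only [dotProduct, mulVec]; fun_prop
  · rw [Real.norm_eq_abs, abs_of_pos (Real.exp_pos _), ← Real.exp_sum, Real.exp_le_exp, ← Finset.mul_sum]
    have := h z
    rw [div_le_iff₀ ht]
    have : -(c / t) * (∑ i, z i ^ 2) * t = -(c * ∑ i, z i ^ 2) := by field_simp
    linarith

lemma accept_bd {α : Type*} (f : α → ℝ) (hf0 : ∀ x, 0 ≤ f x) (x y : α) : ‖accept f x y‖ ≤ 1 := by
  unfold accept
  split_ifs
  · simp
  · rw [Real.norm_eq_abs, abs_of_nonneg (le_min (div_nonneg (hf0 _) (hf0 _)) zero_le_one)]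
    exact min_le_right _ _

lemma gauss_deriv (m : ℕ) (A : Matrix (Fin m) (Fin m) ℝ) (x y : Fin m → ℝ) (σ : ℝ) (hσ : 0 < σ) :
    deriv (fun s => gaussDensity m A x y s) σ =
      (-(m : ℝ) / σ + ((y - x) ⬝ᵥ (A⁻¹).mulVec (y - x)) * σ ^ (-3 : ℤ)) * gaussDensity m A x y σ := by
  unfold gaussDensity
  generalize (y - x) ⬝ᵥ (A⁻¹).mulVec (y - x) = q
  have hpi := Real.pi_pos
  have hb : 0 < 2 * π * σ ^ 2 := by positivity
  have h0 : HasDerivAt (fun s : ℝ => 2 * π * s ^ 2) (2 * π * (2 * σ)) σ := by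
    simpa using (hasDerivAt_pow 2 σ).const_mul (2 * π)
  have h1 := h0.rpow_const (p := -(m : ℝ) / 2) (Or.inl hb.ne')
  have h2 : HasDerivAt (fun s : ℝ => 2 * s ^ 2) (2 * (2 * σ)) σ := by
    simpa using (hasDerivAt_pow 2 σ).const_mul 2
  have h3 := ((hasDerivAt_const σ (-q)).div h2 (by positivity)).exp
  have h4 := (h1.mul_const (A.det ^ (-(1 : ℝ) / 2))).mul h3
  refine h4.deriv.trans ?_
  rw [Real.rpow_sub_one hb.ne']
  simp only [Pi.div_apply]
  have : σ ^ (-3 : ℤ) = (σ ^ 3)⁻¹ := by rw [_root_.zpow_neg]; rfl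
  rw [this]
  generalize Real.exp _ = E
  generalize (2 * π * σ ^ 2) ^ (-(m : ℝ) / 2) = R
  field_simp
  ring

theorem eqn3 (m : ℕ) (A : Matrix (Fin m) (Fin m) ℝ) (hA : A.PosDef)
    (f : (Fin m → ℝ) → ℝ) (hfm : Measurable f) (hf0 : ∀ x, 0 ≤ f x)
    (hf1 : ∫ x, f x = 1)
    (p : ℝ → ℝ)
    (hp : ∀ σ : ℝ, p σ = ∫ x, ∫ y, accept f x y * gaussDensity m A x y σ * f x)
    (φ : ℝ → ℝ)
    (hφ : ∀ σ : ℝ, φ σ = σ ^ (-3 : ℤ) *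
        ∫ x, ∫ y, accept f x y * ((y - x) ⬝ᵥ (A⁻¹).mulVec (y - x)) *
          gaussDensity m A x y σ * f x)
    (σ : ℝ) (hσ : 0 < σ)
    -- the integral defining `φ(σ)` is finite
    (hfin : Integrable (fun q : (Fin m → ℝ) × (Fin m → ℝ) =>
        accept f q.1 q.2 * ((q.2 - q.1) ⬝ᵥ (A⁻¹).mulVec (q.2 - q.1)) *
          gaussDensity m A q.1 q.2 σ * f q.1))
    -- differentiation under the integral sign at `σ`
    (hderiv : HasDerivAt p
        (∫ x, ∫ y, accept f x y * deriv (fun s => gaussDensity m A x y s) σ * f x) σ) :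
    deriv p σ = -(m : ℝ) * p σ / σ + φ σ := by
  have hfi : Integrable f := by
    by_contra h
    rw [integral_undef h] at hf1
    exact zero_ne_one hf1
  have hG : Integrable (fun q : (Fin m → ℝ) × (Fin m → ℝ) => gaussDensity m A q.1 q.2 σ * f q.1) := by
    have h1 := (hfi.convolution_integrand (ContinuousLinearMap.mul ℝ ℝ) (μ := volume)
      (gauss_int m A⁻¹ hA.inv (2 * σ ^ 2) (by positivity))).swap
    refine (h1.const_mul ((2 * π * σ ^ 2) ^ (-(m : ℝ) / 2) * A.det ^ (-(1 : ℝ) / 2))).congr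
      (ae_of_all _ fun q => ?_)
    simp [gaussDensity]
    ring
  have hacc : Measurable (fun q : (Fin m → ℝ) × (Fin m → ℝ) => accept f q.1 q.2) := by
    unfold accept
    refine Measurable.ite (measurableSet_eq_fun (by fun_prop) measurable_const) measurable_const ?_
    fun_prop
  have hI : Integrable (fun q : (Fin m → ℝ) × (Fin m → ℝ) =>
      accept f q.1 q.2 * gaussDensity m A q.1 q.2 σ * f q.1) := by
    simp only [mul_assoc]
    exact hG.bdd_mul (c := 1) hacc.aestronglyMeasurable (ae_of_all _ fun q => accept_bd f hf0 _ _)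
  rw [hderiv.deriv, hp, hφ]
  rw [← integral_prod _ hI, ← integral_prod _ hfin]
  have e : ∀ q : (Fin m → ℝ) × (Fin m → ℝ),
      accept f q.1 q.2 * deriv (fun s => gaussDensity m A q.1 q.2 s) σ * f q.1 =
      (-(m : ℝ) / σ) * (accept f q.1 q.2 * gaussDensity m A q.1 q.2 σ * f q.1) + σ ^ (-3 : ℤ) *
       (accept f q.1 q.2 * ((q.2 - q.1) ⬝ᵥ (A⁻¹).mulVec (q.2 - q.1)) *
          gaussDensity m A q.1 q.2 σ * f q.1) := by
    intro q
    rw [gauss_deriv m A _ _ σ hσ]; ring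
  have hD := (hI.const_mul (-(m : ℝ) / σ)).add (hfin.const_mul (σ ^ (-3 : ℤ)))
  have hD' : Integrable (fun q : (Fin m → ℝ) × (Fin m → ℝ) =>
      accept f q.1 q.2 * deriv (fun s => gaussDensity m A q.1 q.2 s) σ * f q.1) :=
    hD.congr (ae_of_all _ fun q => (e q).symm)
  rw [← integral_prod _ hD', ← Measure.volume_eq_prod, integral_congr_ae (ae_of_all _ e),
    integral_add (hI.const_mul _) (hfin.const_mul _), integral_const_mul, integral_const_mul]
  congr 1
  ring
end

section
/- If the probability density f on ℝ^m has finite second moment M = ∫ xᵀx f(x) dx < ∞, then φ(σ) = O(σ^{-3}): for every σ > 0, σ³·φ(σ) ≤ 4·λ_max(A⁻¹)·M, where λ_max(A⁻¹) denotes the largest eigenvalue of A⁻¹. -/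
open MeasureTheory Real Matrix

lemma quad_spec {m : ℕ} {B : Matrix (Fin m) (Fin m) ℝ} (hB : B.IsHermitian) (z : Fin m → ℝ) :
    z ⬝ᵥ B.mulVec z = ∑ i, hB.eigenvalues i *
      (((hB.eigenvectorUnitary : Matrix (Fin m) (Fin m) ℝ)ᵀ).mulVec z i) ^ 2 := by
  conv_lhs => rw [hB.spectral_theorem, Unitary.conjStarAlgAut_apply]
  set U : Matrix (Fin m) (Fin m) ℝ := (hB.eigenvectorUnitary : Matrix (Fin m) (Fin m) ℝ)
  have hs : star U = Uᵀ := by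
    rw [Matrix.star_eq_conjTranspose, Matrix.conjTranspose_eq_transpose_of_trivial]
  rw [hs, ← Matrix.mulVec_mulVec, ← Matrix.mulVec_mulVec, Matrix.dotProduct_mulVec,
    ← Matrix.mulVec_transpose, dotProduct]
  refine Finset.sum_congr rfl fun i _ => ?_
  rw [Matrix.mulVec_diagonal]
  simp
  ring

lemma unit_spec {m : ℕ} {B : Matrix (Fin m) (Fin m) ℝ} (hB : B.IsHermitian) :
    (hB.eigenvectorUnitary : Matrix (Fin m) (Fin m) ℝ) *
      (hB.eigenvectorUnitary : Matrix (Fin m) (Fin m) ℝ)ᵀ = 1 := by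
  have := Unitary.mul_star_self_of_mem hB.eigenvectorUnitary.2
  rwa [Matrix.star_eq_conjTranspose, Matrix.conjTranspose_eq_transpose_of_trivial] at this

lemma norm_spec {m : ℕ} {B : Matrix (Fin m) (Fin m) ℝ} (hB : B.IsHermitian) (z : Fin m → ℝ) :
    z ⬝ᵥ z = ∑ i,
      (((hB.eigenvectorUnitary : Matrix (Fin m) (Fin m) ℝ)ᵀ).mulVec z i) ^ 2 := by
  have h1 := unit_spec hB
  set U : Matrix (Fin m) (Fin m) ℝ := (hB.eigenvectorUnitary : Matrix (Fin m) (Fin m) ℝ)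
  have : z ⬝ᵥ z = z ⬝ᵥ (U * Uᵀ).mulVec z := by rw [h1, Matrix.one_mulVec]
  rw [this, ← Matrix.mulVec_mulVec, Matrix.dotProduct_mulVec, ← Matrix.mulVec_transpose, dotProduct]
  exact Finset.sum_congr rfl fun i _ => (sq _).symm

lemma quad_le {m : ℕ} {B : Matrix (Fin m) (Fin m) ℝ} (hB : B.IsHermitian) (z : Fin m → ℝ) :
    z ⬝ᵥ B.mulVec z ≤ (⨆ i, hB.eigenvalues i) * (z ⬝ᵥ z) := by
  rw [quad_spec hB, norm_spec hB, Finset.mul_sum]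
  refine Finset.sum_le_sum fun i _ => mul_le_mul_of_nonneg_right ?_ (sq_nonneg _)
  exact le_ciSup (Set.finite_range _).bddAbove i

lemma gauss_integral {m : ℕ} {A : Matrix (Fin m) (Fin m) ℝ} (hA : A.PosDef)
    (hH : (A⁻¹).IsHermitian) {σ : ℝ} (hσ : 0 < σ) :
    ∫ z : Fin m → ℝ, gaussDensity m A 0 z σ = 1 := by
  have hd : ∀ i, 0 < hH.eigenvalues i := (hH.posDef_iff_eigenvalues_pos).1 hA.inv
  have hdet : A⁻¹.det = ∏ i, hH.eigenvalues i := by simpa using hH.det_eq_prod_eigenvalues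
  have hU := unit_spec hH
  have hq := quad_spec hH
  set U : Matrix (Fin m) (Fin m) ℝ := (hH.eigenvectorUnitary : Matrix (Fin m) (Fin m) ℝ)
  set d := hH.eigenvalues
  have hUd : Uᵀ.det * Uᵀ.det = 1 := by
    have := congrArg Matrix.det hU
    rw [Matrix.det_mul, Matrix.det_one] at this
    rwa [Matrix.det_transpose] at this ⊢
  have hU0 : Uᵀ.det ≠ 0 := by intro h; simp [h] at hUd
  have habs : |(Uᵀ.det)⁻¹| = 1 := by
    rw [abs_inv, inv_eq_one]
    nlinarith [abs_nonneg Uᵀ.det, abs_mul_abs_self Uᵀ.det]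
  have hmap := Real.map_matrix_volume_pi_eq_smul_volume_pi hU0
  rw [habs, ENNReal.ofReal_one, one_smul] at hmap
  let h : (Fin m → ℝ) → ℝ := fun w => ∏ i, Real.exp (-(d i / (2 * σ ^ 2)) * (w i) ^ 2)
  have hexp : ∀ z : Fin m → ℝ, Real.exp (-((z - 0) ⬝ᵥ (A⁻¹).mulVec (z - 0)) / (2 * σ ^ 2))
      = h (Matrix.toLin' Uᵀ z) := by
    intro z
    simp only [h]
    rw [sub_zero, hq, ← Real.exp_sum, Matrix.toLin'_apply]
    congr 1
    rw [← Finset.sum_neg_distrib, Finset.sum_div]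
    exact Finset.sum_congr rfl fun i _ => by ring
  have hint : ∫ z : Fin m → ℝ, h (Matrix.toLin' Uᵀ z) = ∫ w, h w := by
    conv_rhs => rw [← hmap]
    rw [integral_map]
    · exact (LinearMap.continuous_of_finiteDimensional _).measurable.aemeasurable
    · exact (by fun_prop : Continuous h).aestronglyMeasurable
  have hval : ∫ w, h w = ∏ i, √(π / (d i / (2 * σ ^ 2))) := by
    simp only [h]
    rw [integral_fintype_prod_volume_eq_prod
      (fun i (x : ℝ) => Real.exp (-(d i / (2 * σ ^ 2)) * x ^ 2))]
    exact Finset.prod_congr rfl fun i _ => integral_gaussian _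
  have hp : 0 < ∏ i, d i := Finset.prod_pos fun i _ => hd i
  have hs : 0 < 2 * π * σ ^ 2 := by positivity
  have hval2 : ∏ i, √(π / (d i / (2 * σ ^ 2)))
      = (2 * π * σ ^ 2) ^ ((m : ℝ) / 2) * (∏ i, d i) ^ (-(1 : ℝ) / 2) := by
    have : ∀ i, √(π / (d i / (2 * σ ^ 2))) = √(2 * π * σ ^ 2) * (d i) ^ (-(1:ℝ)/2) := by
      intro i
      have : π / (d i / (2 * σ ^ 2)) = (2 * π * σ ^ 2) * (d i)⁻¹ := by
        have := (hd i).ne'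
        field_simp
      rw [this, Real.sqrt_mul hs.le, neg_div, Real.rpow_neg (hd i).le, Real.sqrt_inv,
        Real.sqrt_eq_rpow (d i)]
    simp_rw [this]
    rw [Finset.prod_mul_distrib, Finset.prod_const, Real.finsetProd_rpow _ _ (fun i _ => (hd i).le)]
    congr 1
    rw [Real.sqrt_eq_rpow, ← Real.rpow_natCast, ← Real.rpow_mul hs.le]
    congr 1
    simp
    ring
  have hdA : A.det = (∏ i, d i)⁻¹ := by
    rw [← hdet, Matrix.det_nonsing_inv, Ring.inverse_eq_inv', inv_inv]
  simp only [gaussDensity]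
  rw [integral_const_mul]
  simp_rw [hexp]
  rw [hint, hval, hval2, hdA, Real.inv_rpow hp.le]
  have h1 := Real.rpow_pos_of_pos hs ((m:ℝ)/2)
  have h2 := Real.rpow_pos_of_pos hp (-(1 : ℝ) / 2)
  rw [neg_div (2:ℝ) (m:ℝ), Real.rpow_neg hs.le]
  field_simp

lemma dot_sub_le {m : ℕ} (x y : Fin m → ℝ) :
    (y - x) ⬝ᵥ (y - x) ≤ 2 * (x ⬝ᵥ x + y ⬝ᵥ y) := by
  simp only [dotProduct, ← Finset.sum_add_distrib, Finset.mul_sum]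
  refine Finset.sum_le_sum fun i _ => ?_
  simp only [Pi.sub_apply]
  nlinarith [sq_nonneg (y i + x i)]

lemma gauss_shift {m : ℕ} (A : Matrix (Fin m) (Fin m) ℝ) (x y : Fin m → ℝ) (σ : ℝ) :
    gaussDensity m A x y σ = gaussDensity m A 0 (y - x) σ := by
  simp [gaussDensity]

lemma gauss_symm {m : ℕ} (A : Matrix (Fin m) (Fin m) ℝ) (x y : Fin m → ℝ) (σ : ℝ) :
    gaussDensity m A x y σ = gaussDensity m A y x σ := by
  simp only [gaussDensity]
  rw [← neg_sub x y, Matrix.mulVec_neg, dotProduct_neg, neg_dotProduct, neg_neg]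

lemma gauss_nonneg {m : ℕ} {A : Matrix (Fin m) (Fin m) ℝ} (hA : A.PosDef) (x y : Fin m → ℝ)
    (σ : ℝ) : 0 ≤ gaussDensity m A x y σ := by
  have := hA.det_pos
  simp only [gaussDensity]
  positivity

lemma accept_mul {α : Type*} {f : α → ℝ} (hf0 : ∀ x, 0 ≤ f x) (x y : α) :
    accept f x y * f x = min (f x) (f y) := by
  unfold accept
  split_ifs with h
  · simp [h, hf0 y]
  · have hx : 0 < f x := lt_of_le_of_ne (hf0 x) (Ne.symm h)
    rw [min_mul_of_nonneg _ _ hx.le, div_mul_cancel₀ _ h, one_mul, min_comm]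

/-- If `f` has finite second moment `M = ∫ xᵀx f(x) dx < ∞`, then `φ(σ) = O(σ⁻³)`:
for every `σ > 0`, `σ³ φ(σ) ≤ 4 λ_max(A⁻¹) M`, where `λ_max(A⁻¹)` is the largest
eigenvalue of `A⁻¹`. -/
theorem phi_big_O (m : ℕ) (A : Matrix (Fin m) (Fin m) ℝ) (hA : A.PosDef)
    (hH : (A⁻¹).IsHermitian)
    (f : (Fin m → ℝ) → ℝ) (hfm : Measurable f) (hf0 : ∀ x, 0 ≤ f x)
    (hf1 : ∫ x, f x = 1)
    -- finite second moment `M`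
    (M : ℝ) (hMdef : M = ∫ x, (x ⬝ᵥ x) * f x)
    (hM : Integrable (fun x : Fin m → ℝ => (x ⬝ᵥ x) * f x))
    (φ : ℝ → ℝ)
    (hφ : ∀ σ : ℝ, φ σ = σ ^ (-3 : ℤ) *
        ∫ x, ∫ y, accept f x y * ((y - x) ⬝ᵥ (A⁻¹).mulVec (y - x)) *
          gaussDensity m A x y σ * f x)
    (σ : ℝ) (hσ : 0 < σ) :
    σ ^ 3 * φ σ ≤ 4 * (⨆ i : Fin m, hH.eigenvalues i) * M := by
  set lam := ⨆ i : Fin m, hH.eigenvalues i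
  have hlam : 0 ≤ lam := Real.iSup_nonneg fun i => (hA.inv.posSemidef.eigenvalues_nonneg i)
  have hk1 := gauss_integral hA hH hσ
  have hki : Integrable (fun z : Fin m → ℝ => gaussDensity m A 0 z σ) := by
    by_contra h
    rw [integral_undef h] at hk1
    exact zero_ne_one hk1
  set F : (Fin m → ℝ) → ℝ := fun x => (x ⬝ᵥ x) * f x with hF
  have hc : Integrable (fun p : (Fin m → ℝ) × (Fin m → ℝ) =>
      F p.2 * gaussDensity m A p.2 p.1 σ) (volume.prod volume) := by
    have := hM.convolution_integrand (ContinuousLinearMap.mul ℝ ℝ) hki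
    simpa only [ContinuousLinearMap.mul_apply', ← gauss_shift] using this
  have hc2 : Integrable (fun p : (Fin m → ℝ) × (Fin m → ℝ) =>
      F p.1 * gaussDensity m A p.1 p.2 σ) (volume.prod volume) := hc.swap
  have hc1 : Integrable (fun p : (Fin m → ℝ) × (Fin m → ℝ) =>
      F p.2 * gaussDensity m A p.1 p.2 σ) (volume.prod volume) := by
    simpa only [gauss_symm A _ _ σ] using (by
      refine hc.congr (Filter.Eventually.of_forall fun p => ?_)
      simp only [gauss_symm A p.2 p.1] : Integrable (fun p : (Fin m → ℝ) × (Fin m → ℝ) =>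
      F p.2 * gaussDensity m A p.1 p.2 σ) (volume.prod volume))
  have hsh : ∀ x : Fin m → ℝ, ∫ y, gaussDensity m A x y σ = 1 := by
    intro x
    simp_rw [gauss_shift A x]
    rw [integral_sub_right_eq_self (fun z => gaussDensity m A 0 z σ), hk1]
  have hv2 : ∫ x, ∫ y, F x * gaussDensity m A x y σ = M := by
    simp_rw [integral_const_mul, hsh, mul_one]
    exact hMdef.symm
  have hv1 : ∫ x, ∫ y, F y * gaussDensity m A x y σ = M := by
    rw [integral_integral_swap hc1, ← hv2]
    refine integral_congr_ae (Filter.Eventually.of_forall fun x => ?_)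
    exact integral_congr_ae (Filter.Eventually.of_forall fun y => by
      simp only [gauss_symm A x y])
  let H : (Fin m → ℝ) × (Fin m → ℝ) → ℝ := fun p =>
    2 * lam * (F p.1 * gaussDensity m A p.1 p.2 σ + F p.2 * gaussDensity m A p.1 p.2 σ)
  have hHi : Integrable H (volume.prod volume) := (hc2.add hc1).const_mul _
  have hHv : ∫ x, ∫ y, H (x, y) = 4 * lam * M := by
    rw [← integral_prod _ hHi]
    simp only [H]
    rw [integral_const_mul, integral_add hc2 hc1, integral_prod _ hc2, integral_prod _ hc1]
    simp only
    rw [hv1, hv2]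
    ring
  have hdd : ∀ x : Fin m → ℝ, 0 ≤ x ⬝ᵥ x := fun x =>
    Finset.sum_nonneg fun i _ => mul_self_nonneg _
  have hq0 : ∀ z : Fin m → ℝ, 0 ≤ z ⬝ᵥ (A⁻¹).mulVec z := fun z => by
    simpa using hA.inv.posSemidef.dotProduct_mulVec_nonneg z
  have hG : ∀ x y, accept f x y * ((y - x) ⬝ᵥ (A⁻¹).mulVec (y - x)) *
          gaussDensity m A x y σ * f x =
      min (f x) (f y) * ((y - x) ⬝ᵥ (A⁻¹).mulVec (y - x)) * gaussDensity m A x y σ := by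
    intro x y
    rw [← accept_mul hf0]
    ring
  have hG0 : ∀ x y, 0 ≤ min (f x) (f y) * ((y - x) ⬝ᵥ (A⁻¹).mulVec (y - x)) *
      gaussDensity m A x y σ := fun x y =>
    mul_nonneg (mul_nonneg (le_min (hf0 x) (hf0 y)) (hq0 _)) (gauss_nonneg hA _ _ _)
  have hGH : ∀ x y, min (f x) (f y) * ((y - x) ⬝ᵥ (A⁻¹).mulVec (y - x)) *
      gaussDensity m A x y σ ≤ H (x, y) := by
    intro x y
    simp only [H]
    rw [← add_mul, ← mul_assoc]
    refine mul_le_mul_of_nonneg_right ?_ (gauss_nonneg hA _ _ _)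
    have hm := le_min (hf0 x) (hf0 y)
    calc min (f x) (f y) * ((y - x) ⬝ᵥ (A⁻¹).mulVec (y - x))
        ≤ min (f x) (f y) * (lam * (2 * (x ⬝ᵥ x + y ⬝ᵥ y))) :=
          mul_le_mul_of_nonneg_left ((quad_le hH _).trans
            (mul_le_mul_of_nonneg_left (dot_sub_le x y) hlam)) hm
      _ = 2 * lam * ((x ⬝ᵥ x) * min (f x) (f y) + (y ⬝ᵥ y) * min (f x) (f y)) := by ring
      _ ≤ 2 * lam * (F x + F y) := by
          refine mul_le_mul_of_nonneg_left (add_le_add ?_ ?_) (by positivity)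
          · exact mul_le_mul_of_nonneg_left (min_le_left _ _) (hdd x)
          · exact mul_le_mul_of_nonneg_left (min_le_right _ _) (hdd y)
  have hφ' : σ ^ 3 * φ σ = ∫ x, ∫ y, min (f x) (f y) *
      ((y - x) ⬝ᵥ (A⁻¹).mulVec (y - x)) * gaussDensity m A x y σ := by
    rw [hφ, ← mul_assoc]
    have : σ ^ 3 * σ ^ (-3 : ℤ) = 1 := by
      rw [_root_.zpow_neg]
      exact mul_inv_cancel₀ (by positivity)
    rw [this, one_mul]
    simp_rw [hG]
  rw [hφ', ← hHv]
  refine integral_mono_of_nonneg (Filter.Eventually.of_forall fun x =>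
    integral_nonneg fun y => hG0 x y) hHi.integral_prod_left ?_
  filter_upwards [hHi.prod_right_ae] with x hx
  exact integral_mono_of_nonneg (Filter.Eventually.of_forall fun y => hG0 x y) hx
    (Filter.Eventually.of_forall fun y => hGH x y)
end

section
/- Let x ∈ ℝ^m and λ ∈ ℝ^m be fixed vectors, let R = {y ∈ ℝ^m : λᵀ(y - x) ≤ 0}, let b_{ij} denote the (i,j) entry of A⁻¹, and let σ > 0. Then for every coordinate index i ∈ {1,…,m}, ∫_R λᵀ(y - x) · σ^{-3} Σ_{j=1}^m b_{ij}(y_i - x_i)(y_j - x_j) · g(y|x,σ) dy = σ^{-1} ∫_R {λᵀ(y - x) + λ_i(y_i - x_i)} · g(y|x,σ) dy. (Equation (A.4)) -/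
open MeasureTheory Real Matrix

lemma coer {m : ℕ} (B : Matrix (Fin m) (Fin m) ℝ) (hB : B.PosDef) :
    ∃ c : ℝ, 0 < c ∧ ∀ u : Fin m → ℝ, c * ‖u‖ ^ 2 ≤ u ⬝ᵥ B *ᵥ u := by
  have hc : Continuous fun u : Fin m → ℝ => u ⬝ᵥ B *ᵥ u := by fun_prop
  obtain ⟨c, hc0, hc⟩ := (isCompact_sphere (0 : Fin m → ℝ) 1).exists_forall_le' hc.continuousOn (a := 0)
    (fun b hb => by
      have hb0 : b ≠ 0 := by
        rintro rfl
        simp at hb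
      simpa using hB.dotProduct_mulVec_pos hb0)
  refine ⟨c, hc0, fun u => ?_⟩
  by_cases hu : u = 0
  · simp [hu]
  have hn : 0 < ‖u‖ := norm_pos_iff.mpr hu
  have h1 := hc (‖u‖⁻¹ • u) (by simp [norm_smul, hn.ne'])
  simp only [Matrix.mulVec_smul, dotProduct_smul, smul_dotProduct, smul_eq_mul] at h1
  have : ‖u‖ * (‖u‖ * c) ≤ ‖u‖ * (‖u‖ * (‖u‖⁻¹ * (‖u‖⁻¹ * (u ⬝ᵥ B *ᵥ u)))) := by gcongr
  calc _ = ‖u‖ * (‖u‖ * c) := by ring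
    _ ≤ _ := this
    _ = _ := by field_simp

lemma exp_bd (c : ℝ) (hc : 0 < c) (N : ℕ) :
    ∃ K : ℝ, ∀ s : ℝ, 0 ≤ s → (1 + s) ^ N * Real.exp (-(c * s ^ 2)) ≤ K := by
  refine ⟨N.factorial * Real.exp (1 + 1 / (4 * c)), fun s hs => ?_⟩
  have h1 := Real.pow_div_factorial_le_exp (1 + s) (by positivity) N
  rw [div_le_iff₀ (by positivity)] at h1
  calc (1 + s) ^ N * Real.exp (-(c * s ^ 2)) ≤ (Real.exp (1 + s) * N.factorial) * Real.exp (-(c * s ^ 2)) := by gcongr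
    _ = N.factorial * Real.exp (1 + s - c * s ^ 2) := by rw [sub_eq_add_neg, Real.exp_add (1+s)]; ring
    _ ≤ _ := by
      gcongr
      have : 1 / (4 * c) - s + c * s ^ 2 = c * (s - 1 / (2 * c)) ^ 2 := by field_simp; ring
      have : 0 ≤ c * (s - 1 / (2 * c)) ^ 2 := by positivity
      linarith

/-- unnormalised Gaussian -/
noncomputable def EE {m : ℕ} (B : Matrix (Fin m) (Fin m) ℝ) (σ : ℝ) (u : Fin m → ℝ) : ℝ :=
  Real.exp (-(u ⬝ᵥ B *ᵥ u) / (2 * σ ^ 2))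

lemma EE_cont {m : ℕ} (B : Matrix (Fin m) (Fin m) ℝ) (σ : ℝ) : Continuous (EE B σ) := by
  unfold EE; fun_prop

lemma EE_pos {m : ℕ} (B : Matrix (Fin m) (Fin m) ℝ) (σ : ℝ) (u) : 0 < EE B σ u := Real.exp_pos _

lemma EE_int {m : ℕ} (B : Matrix (Fin m) (Fin m) ℝ) (hB : B.PosDef) (σ : ℝ) (hσ : 0 < σ) (k : ℕ) :
    Integrable (fun u : Fin m → ℝ => (1 + ‖u‖) ^ k * EE B σ u) := by
  obtain ⟨c, hc, hcb⟩ := coer B hB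
  obtain ⟨K, hK⟩ := exp_bd (c / (2 * σ ^ 2)) (by positivity) (k + (m + 1))
  have h0 : Integrable (fun u : Fin m → ℝ => (1 + ‖u‖) ^ (-((m : ℝ) + 1))) :=
    integrable_one_add_norm (by simp)
  refine (h0.const_mul K).mono' ?_ ?_
  · have := EE_cont B σ
    exact Continuous.aestronglyMeasurable (by fun_prop)
  · refine ae_of_all _ fun u => ?_
    have h1 : 0 < 1 + ‖u‖ := by positivity
    have hE := EE_pos B σ u
    rw [Real.norm_of_nonneg (by positivity), Real.rpow_neg h1.le, ← div_eq_mul_inv,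
      le_div_iff₀ (by positivity)]
    have e : (1 + ‖u‖) ^ ((m : ℝ) + 1) = (1 + ‖u‖) ^ (m + 1) := by
      rw [← Real.rpow_natCast]; simp
    rw [e]
    calc _ = (1 + ‖u‖) ^ (k + (m + 1)) * EE B σ u := by ring
      _ ≤ (1 + ‖u‖) ^ (k + (m + 1)) * Real.exp (-(c / (2 * σ ^ 2) * ‖u‖ ^ 2)) := by
        gcongr
        unfold EE
        gcongr
        rw [neg_div, div_mul_eq_mul_div]
        gcongr
        exact hcb u
      _ ≤ K := hK _ (norm_nonneg _)

lemma EE_int_of_bd {m : ℕ} (B : Matrix (Fin m) (Fin m) ℝ) (hB : B.PosDef) (σ : ℝ) (hσ : 0 < σ)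
    (k : ℕ) (C : ℝ) (f : (Fin m → ℝ) → ℝ) (hf : Measurable f)
    (hb : ∀ u, |f u| ≤ C * (1 + ‖u‖) ^ k) :
    Integrable (fun u : Fin m → ℝ => f u * EE B σ u) := by
  refine ((EE_int B hB σ hσ k).const_mul C).mono' ?_ ?_
  · exact (hf.mul (EE_cont B σ).measurable).aestronglyMeasurable
  · refine ae_of_all _ fun u => ?_
    have hE := EE_pos B σ u
    rw [norm_mul, Real.norm_of_nonneg hE.le, ← mul_assoc]
    gcongr
    exact hb u

lemma dot_bd {m : ℕ} (a u : Fin m → ℝ) : |a ⬝ᵥ u| ≤ (∑ j, |a j|) * (1 + ‖u‖) := by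
  calc |a ⬝ᵥ u| ≤ ∑ j, |a j * u j| := Finset.abs_sum_le_sum_abs _ _
    _ ≤ ∑ j, |a j| * (1 + ‖u‖) := by
      gcongr with j
      rw [abs_mul]
      gcongr
      have := norm_le_pi_norm u j
      rw [Real.norm_eq_abs] at this
      linarith
    _ = _ := by rw [Finset.sum_mul]

lemma EE_line {m : ℕ} (B : Matrix (Fin m) (Fin m) ℝ) (hB : B.PosDef) (σ : ℝ) (hσ : 0 < σ)
    (i : Fin m) (u : Fin m → ℝ) :
    HasLineDerivAt ℝ (fun u : Fin m → ℝ => u i * EE B σ u)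
      ((1 - u i * (B i ⬝ᵥ u) / σ ^ 2) * EE B σ u) u (Pi.single i 1) := by
  unfold HasLineDerivAt
  have hs : Bᵀ = B := by simpa using hB.isHermitian.eq
  have e : ∀ t : ℝ, (u + t • Pi.single i 1) ⬝ᵥ B *ᵥ (u + t • Pi.single i 1)
      = u ⬝ᵥ B *ᵥ u + 2 * (B i ⬝ᵥ u) * t + B i i * t ^ 2 := by
    intro t
    have e1 : u ⬝ᵥ B *ᵥ (Pi.single i 1) = B i ⬝ᵥ u := by
      rw [dotProduct_mulVec, ← mulVec_transpose, hs]; simp [mulVec]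
    have e2 : (Pi.single i 1 : Fin m → ℝ) ⬝ᵥ B *ᵥ u = B i ⬝ᵥ u := by simp [mulVec]
    have e3 : (Pi.single i 1 : Fin m → ℝ) ⬝ᵥ B *ᵥ (Pi.single i 1) = B i i := by simp
    simp only [mulVec_add, mulVec_smul, dotProduct_add, add_dotProduct, smul_dotProduct,
      dotProduct_smul, e1, e2, e3, smul_eq_mul]
    ring
  simp only [EE, e]
  have h1 : HasDerivAt (fun t : ℝ => u ⬝ᵥ B *ᵥ u + 2 * (B i ⬝ᵥ u) * t + B i i * t ^ 2)
      (2 * (B i ⬝ᵥ u)) 0 := by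
    have := (((hasDerivAt_id (0:ℝ)).const_mul (2 * (B i ⬝ᵥ u))).const_add (u ⬝ᵥ B *ᵥ u)).add
      (((hasDerivAt_id (0:ℝ)).pow 2).const_mul (B i i))
    refine this.congr_deriv ?_
    simp
  have h2 := ((h1.neg).div_const (2 * σ ^ 2)).exp
  have h3 : HasDerivAt (fun t : ℝ => (u + t • (Pi.single i 1 : Fin m → ℝ)) i) 1 0 := by
    have := (hasDerivAt_id (0:ℝ)).const_add (u i)
    simpa using this
  refine (h3.mul h2).congr_deriv ?_
  simp
  field_simp
  ring

/-- smooth approx of min t 0 -/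
noncomputable def ph (d t : ℝ) : ℝ := (t - √(t ^ 2 + d)) / 2
noncomputable def ph' (d t : ℝ) : ℝ := (1 - t / √(t ^ 2 + d)) / 2

lemma ph_deriv (d t : ℝ) (hd : 0 < d) : HasDerivAt (ph d) (ph' d t) t := by
  have h1 : HasDerivAt (fun t : ℝ => t ^ 2 + d) (2 * t) t := by
    simpa using ((hasDerivAt_id t).pow 2).add_const d
  have h2 := h1.sqrt (by positivity)
  have h3 := ((hasDerivAt_id t).sub h2).div_const 2
  have e : ph' d t = (1 - 2 * t / (2 * √(t ^ 2 + d))) / 2 := by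
    unfold ph'
    field_simp
  rw [e]
  exact h3

lemma ph'_bd (d t : ℝ) (hd : 0 ≤ d) : |ph' d t| ≤ 1 := by
  have : |t / √(t ^ 2 + d)| ≤ 1 := by
    rw [abs_div, abs_of_nonneg (Real.sqrt_nonneg _)]
    refine div_le_one_of_le₀ ?_ (Real.sqrt_nonneg _)
    exact Real.abs_le_sqrt (by linarith)
  unfold ph'
  rw [abs_le] at *
  constructor <;> linarith [this.1, this.2]

lemma ph_bd (d t : ℝ) (_hd : 0 ≤ d) (hd1 : d ≤ 1) : |ph d t| ≤ |t| + 1 := by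
  have : √(t ^ 2 + d) ≤ |t| + 1 := by
    apply Real.sqrt_le_iff.mpr
    refine ⟨by positivity, ?_⟩
    nlinarith [sq_abs t, abs_nonneg t]
  have h0 := Real.sqrt_nonneg (t ^ 2 + d)
  unfold ph
  rw [abs_le]
  constructor <;> linarith [le_abs_self t, neg_abs_le t]

lemma ph_tend (t : ℝ) : Filter.Tendsto (fun n : ℕ => ph (1 / ((n:ℝ) + 1)) t) Filter.atTop (nhds (min t 0)) := by
  have h : Continuous fun d => ph d t := by unfold ph; fun_prop
  have := (h.tendsto 0).comp (tendsto_one_div_add_atTop_nhds_zero_nat (𝕜 := ℝ))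
  suffices e : min t 0 = ph 0 t by
    rw [e]; exact this
  simp only [ph, add_zero, Real.sqrt_sq_eq_abs]
  rcases le_total t 0 with h | h
  · rw [min_eq_left h, abs_of_nonpos h]; ring
  · rw [min_eq_right h, abs_of_nonneg h]; ring

lemma ph'_tend (t : ℝ) (ht : t ≠ 0) : Filter.Tendsto (fun n : ℕ => ph' (1 / ((n:ℝ) + 1)) t) Filter.atTop
    (nhds (if t ≤ 0 then 1 else 0)) := by
  have h : ContinuousAt (fun d => ph' d t) 0 := by
    have : √(t ^ 2 + 0) ≠ 0 := by simp [ht, Real.sqrt_sq_eq_abs]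
    unfold ph'; fun_prop (disch := assumption)
  have := h.tendsto.comp (tendsto_one_div_add_atTop_nhds_zero_nat (𝕜 := ℝ))
  suffices e : (if t ≤ 0 then (1:ℝ) else 0) = ph' 0 t by
    rw [e]; exact this
  simp only [ph', add_zero, Real.sqrt_sq_eq_abs]
  split_ifs with h
  · rw [abs_of_nonpos h]; field_simp; norm_num
  · rw [abs_of_pos (not_le.mp h), div_self ht]; norm_num

lemma coord_bd {m : ℕ} (u : Fin m → ℝ) (i : Fin m) : |u i| ≤ 1 + ‖u‖ := by
  have := norm_le_pi_norm u i
  rw [Real.norm_eq_abs] at this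
  linarith

lemma bd2 {m : ℕ} (B : Matrix (Fin m) (Fin m) ℝ) (σ : ℝ) (i : Fin m) (u : Fin m → ℝ) :
    |1 - u i * (B i ⬝ᵥ u) / σ ^ 2| ≤ (1 + (∑ j, |B i j|) / σ ^ 2) * (1 + ‖u‖) ^ 2 := by
  have h1 : |u i * (B i ⬝ᵥ u) / σ ^ 2| ≤ (1 + ‖u‖) * ((∑ j, |B i j|) * (1 + ‖u‖)) / σ ^ 2 := by
    rw [abs_div, abs_mul, abs_of_nonneg (sq_nonneg σ)]
    gcongr
    · exact coord_bd u i
    · exact dot_bd _ _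
  have h2 : |1 - u i * (B i ⬝ᵥ u) / σ ^ 2| ≤ 1 + |u i * (B i ⬝ᵥ u) / σ ^ 2| := by
    simpa using abs_sub (1:ℝ) (u i * (B i ⬝ᵥ u) / σ ^ 2)
  have h3 : (1:ℝ) ≤ (1 + ‖u‖) ^ 2 := one_le_pow₀ (by linarith [norm_nonneg u])
  calc _ ≤ _ := h2
    _ ≤ (1 + ‖u‖) ^ 2 + (1 + ‖u‖) * ((∑ j, |B i j|) * (1 + ‖u‖)) / σ ^ 2 := add_le_add h3 h1
    _ = _ := by ring

lemma bd1 {m : ℕ} (lam : Fin m → ℝ) (u : Fin m → ℝ) (p : ℝ) (hp : |p| ≤ |lam ⬝ᵥ u| + 1) :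
    |p| ≤ ((∑ j, |lam j|) + 1) * (1 + ‖u‖) := by
  linarith [dot_bd lam u, norm_nonneg u]

lemma bd12 {m : ℕ} (B : Matrix (Fin m) (Fin m) ℝ) (σ : ℝ) (i : Fin m)
    (lam : Fin m → ℝ) (u : Fin m → ℝ) (p : ℝ) (hp : |p| ≤ |lam ⬝ᵥ u| + 1) :
    |p * (1 - u i * (B i ⬝ᵥ u) / σ ^ 2)| ≤
      (((∑ j, |lam j|) + 1) * (1 + (∑ j, |B i j|) / σ ^ 2)) * (1 + ‖u‖) ^ 3 := by
  rw [abs_mul]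
  have h0 : 0 ≤ ∑ j, |lam j| := Finset.sum_nonneg fun _ _ => abs_nonneg _
  calc _ ≤ (((∑ j, |lam j|) + 1) * (1 + ‖u‖)) *
      ((1 + (∑ j, |B i j|) / σ ^ 2) * (1 + ‖u‖) ^ 2) :=
        mul_le_mul (bd1 lam u p hp) (bd2 B σ i u) (abs_nonneg _) (by positivity)
    _ = _ := by ring

lemma bd3 {m : ℕ} (i : Fin m) (u : Fin m → ℝ) (a p : ℝ) (hp : |p| ≤ 1) :
    |a * p * u i| ≤ |a| * (1 + ‖u‖) ^ 1 := by
  rw [abs_mul, abs_mul, pow_one]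
  gcongr
  · exact mul_le_of_le_one_right (abs_nonneg a) hp
  · exact coord_bd u i

lemma ph_cont (d : ℝ) : Continuous (ph d) := by unfold ph; fun_prop
lemma ph'_meas (d : ℝ) : Measurable (ph' d) := by unfold ph'; fun_prop

lemma dot_cont {m : ℕ} (a : Fin m → ℝ) : Continuous fun u : Fin m → ℝ => a ⬝ᵥ u := by fun_prop

lemma step {m : ℕ} (B : Matrix (Fin m) (Fin m) ℝ) (hB : B.PosDef) (σ : ℝ) (hσ : 0 < σ)
    (lam : Fin m → ℝ) (i : Fin m) (d : ℝ) (hd : 0 < d) (hd1 : d ≤ 1) :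
    ∫ u, ph d (lam ⬝ᵥ u) * (1 - u i * (B i ⬝ᵥ u) / σ ^ 2) * EE B σ u
      = - ∫ u, lam i * ph' d (lam ⬝ᵥ u) * u i * EE B σ u := by
  have m1 : Measurable fun u : Fin m → ℝ => ph d (lam ⬝ᵥ u) :=
    ((ph_cont d).comp (dot_cont lam)).measurable
  have m2 : Measurable fun u : Fin m → ℝ => ph' d (lam ⬝ᵥ u) :=
    (ph'_meas d).comp (dot_cont lam).measurable
  have m3 := (dot_cont (B i)).measurable
  have key := integral_bilinear_hasLineDerivAt_right_eq_neg_left_of_integrable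
    (μ := (volume : Measure (Fin m → ℝ)))
    (f := fun u => ph d (lam ⬝ᵥ u)) (f' := fun u => lam i * ph' d (lam ⬝ᵥ u))
    (g := fun u => u i * EE B σ u)
    (g' := fun u => (1 - u i * (B i ⬝ᵥ u) / σ ^ 2) * EE B σ u)
    (v := Pi.single i 1) (B := ContinuousLinearMap.mul ℝ ℝ) ?_ ?_ ?_ ?_ ?_
  · simpa only [ContinuousLinearMap.mul_apply', ← mul_assoc] using key
  · simp only [ContinuousLinearMap.mul_apply', ← mul_assoc]
    exact EE_int_of_bd B hB σ hσ 1 _ _ (by fun_prop)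
      fun u => bd3 i u _ _ (ph'_bd _ _ hd.le)
  · simp only [ContinuousLinearMap.mul_apply', ← mul_assoc]
    exact EE_int_of_bd B hB σ hσ 3 _ _ (by fun_prop)
      fun u => bd12 B σ i lam u _ (ph_bd _ _ hd.le hd1)
  · simp only [ContinuousLinearMap.mul_apply', ← mul_assoc]
    refine EE_int_of_bd B hB σ hσ 2 ((∑ j, |lam j|) + 1) _ (by fun_prop) fun u => ?_
    rw [abs_mul, pow_two, ← mul_assoc]
    have h0 : 0 ≤ ∑ j, |lam j| := Finset.sum_nonneg fun _ _ => abs_nonneg _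
    exact mul_le_mul (bd1 lam u _ (ph_bd _ _ hd.le hd1)) (coord_bd u i) (abs_nonneg _)
      (by positivity)
  · intro u _
    unfold HasLineDerivAt
    have h1 : HasDerivAt (fun t : ℝ => lam ⬝ᵥ (u + t • (Pi.single i 1 : Fin m → ℝ))) (lam i) 0 := by
      have := ((hasDerivAt_id (0:ℝ)).mul_const (lam i)).const_add (lam ⬝ᵥ u)
      simpa [dotProduct_add, dotProduct_smul] using this
    have h2 := ph_deriv d (lam ⬝ᵥ (u + (0:ℝ) • (Pi.single i 1 : Fin m → ℝ))) hd
    have h3 := h2.comp 0 h1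
    rw [zero_smul, add_zero, mul_comm] at h3
    exact h3
  · intro u _
    exact EE_line B hB σ hσ i u

lemma core {m : ℕ} (B : Matrix (Fin m) (Fin m) ℝ) (hB : B.PosDef) (σ : ℝ) (hσ : 0 < σ)
    (lam : Fin m → ℝ) (i : Fin m) :
    ∫ u, min (lam ⬝ᵥ u) 0 * (1 - u i * (B i ⬝ᵥ u) / σ ^ 2) * EE B σ u
      = - ∫ u, lam i * (if lam ⬝ᵥ u ≤ 0 then 1 else 0) * u i * EE B σ u := by
  have m3 := (dot_cont (B i)).measurable
  have mE := (EE_cont B σ).measurable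
  have hd : ∀ n : ℕ, 0 < 1 / ((n:ℝ) + 1) := fun n => by positivity
  have hd1 : ∀ n : ℕ, 1 / ((n:ℝ) + 1) ≤ 1 := fun n => by
    rw [div_le_one (by positivity)]; linarith [(Nat.cast_nonneg n : (0:ℝ) ≤ n)]
  have m1 : ∀ d, Measurable fun u : Fin m → ℝ => ph d (lam ⬝ᵥ u) := fun d =>
    ((ph_cont d).comp (dot_cont lam)).measurable
  have m2 : ∀ d, Measurable fun u : Fin m → ℝ => ph' d (lam ⬝ᵥ u) := fun d =>
    (ph'_meas d).comp (dot_cont lam).measurable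
  have T1 := tendsto_integral_of_dominated_convergence (μ := (volume : Measure (Fin m → ℝ)))
    (F := fun (n : ℕ) u => ph (1 / ((n:ℝ) + 1)) (lam ⬝ᵥ u) *
      (1 - u i * (B i ⬝ᵥ u) / σ ^ 2) * EE B σ u)
    (f := fun u => min (lam ⬝ᵥ u) 0 * (1 - u i * (B i ⬝ᵥ u) / σ ^ 2) * EE B σ u)
    (fun u => (((∑ j, |lam j|) + 1) * (1 + (∑ j, |B i j|) / σ ^ 2)) *
      ((1 + ‖u‖) ^ 3 * EE B σ u))
    (fun n => by
      have := m1 (1 / ((n:ℝ) + 1))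
      exact Measurable.aestronglyMeasurable (by fun_prop))
    ((EE_int B hB σ hσ 3).const_mul _)
    (fun n => ae_of_all _ fun u => by
      have hE := EE_pos B σ u
      rw [norm_mul, Real.norm_of_nonneg hE.le, ← mul_assoc]
      exact mul_le_mul_of_nonneg_right
        (bd12 B σ i lam u _ (ph_bd _ _ (hd n).le (hd1 n))) hE.le)
    (ae_of_all _ fun u => ((ph_tend (lam ⬝ᵥ u)).mul_const _).mul_const _)
  have T2 := tendsto_integral_of_dominated_convergence (μ := (volume : Measure (Fin m → ℝ)))
    (F := fun (n : ℕ) u => lam i * ph' (1 / ((n:ℝ) + 1)) (lam ⬝ᵥ u) * u i * EE B σ u)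
    (f := fun u => lam i * (if lam ⬝ᵥ u ≤ 0 then 1 else 0) * u i * EE B σ u)
    (fun u => |lam i| * ((1 + ‖u‖) ^ 1 * EE B σ u))
    (fun n => by
      have := m2 (1 / ((n:ℝ) + 1))
      exact Measurable.aestronglyMeasurable (by fun_prop))
    ((EE_int B hB σ hσ 1).const_mul _)
    (fun n => ae_of_all _ fun u => by
      have hE := EE_pos B σ u
      rw [norm_mul, Real.norm_of_nonneg hE.le, ← mul_assoc]
      exact mul_le_mul_of_nonneg_right
        (bd3 i u _ _ (ph'_bd _ _ (hd n).le)) hE.le)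
    (by
      by_cases hl : lam i = 0
      · simp [hl]
      have h0 : (volume : Measure (Fin m → ℝ))
          (LinearMap.ker (dotProductBilin ℝ ℝ lam) : Submodule ℝ (Fin m → ℝ)) = 0 := by
        apply Measure.addHaar_submodule
        intro h
        have : (Pi.single i 1 : Fin m → ℝ) ∈ LinearMap.ker (dotProductBilin ℝ ℝ lam) := by
          rw [h]; trivial
        simp at this
        exact hl this
      have h1 : ∀ᵐ u : Fin m → ℝ, lam ⬝ᵥ u ≠ 0 := by
        rw [ae_iff]
        convert h0 using 2
        ext u
        simp
      filter_upwards [h1] with u hu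
      exact (((ph'_tend _ hu).const_mul _).mul_const _).mul_const _)
  have T3 := T2.neg
  refine tendsto_nhds_unique T1 (T3.congr fun n => ?_)
  exact (step B hB σ hσ lam i _ (hd n) (hd1 n)).symm

lemma core2 {m : ℕ} (B : Matrix (Fin m) (Fin m) ℝ) (hB : B.PosDef) (σ : ℝ) (hσ : 0 < σ)
    (lam : Fin m → ℝ) (i : Fin m) :
    ∫ u in {u : Fin m → ℝ | lam ⬝ᵥ u ≤ 0}, (lam ⬝ᵥ u) * (u i * (B i ⬝ᵥ u)) * EE B σ u
      = σ ^ 2 * ∫ u in {u : Fin m → ℝ | lam ⬝ᵥ u ≤ 0}, ((lam ⬝ᵥ u) + lam i * u i) * EE B σ u := by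
  have hS : MeasurableSet {u : Fin m → ℝ | lam ⬝ᵥ u ≤ 0} :=
    measurableSet_le (dot_cont lam).measurable measurable_const
  have hc := core B hB σ hσ lam i
  have m3 := (dot_cont (B i)).measurable
  have m4 := (dot_cont lam).measurable
  have I1 : Integrable fun u : Fin m → ℝ =>
      (lam ⬝ᵥ u) * (1 - u i * (B i ⬝ᵥ u) / σ ^ 2) * EE B σ u :=
    EE_int_of_bd B hB σ hσ 3 _ _ (by fun_prop) fun u => bd12 B σ i lam u _ (by linarith)
  have I2 : Integrable fun u : Fin m → ℝ => ((lam ⬝ᵥ u) + lam i * u i) * EE B σ u := by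
    refine EE_int_of_bd B hB σ hσ 1 ((∑ j, |lam j|) + |lam i|) _ (by fun_prop) fun u => ?_
    calc _ ≤ |lam ⬝ᵥ u| + |lam i * u i| := abs_add_le _ _
      _ ≤ (∑ j, |lam j|) * (1 + ‖u‖) + |lam i| * (1 + ‖u‖) := by
        rw [abs_mul]
        gcongr
        · exact dot_bd _ _
        · exact coord_bd u i
      _ = _ := by ring
  have I3 : Integrable fun u : Fin m → ℝ => lam i * u i * EE B σ u := by
    refine EE_int_of_bd B hB σ hσ 1 |lam i| _ (by fun_prop) fun u => ?_
    simpa using bd3 i u (lam i) 1 (by simp)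
  have e1 : ∫ u in {u : Fin m → ℝ | lam ⬝ᵥ u ≤ 0},
      (lam ⬝ᵥ u) * (1 - u i * (B i ⬝ᵥ u) / σ ^ 2) * EE B σ u
      = - ∫ u in {u : Fin m → ℝ | lam ⬝ᵥ u ≤ 0}, lam i * u i * EE B σ u := by
    rw [← integral_indicator hS, ← integral_indicator hS]
    refine Eq.trans (integral_congr_ae (ae_of_all _ fun u => ?_)) (hc.trans (congrArg Neg.neg
      (integral_congr_ae (ae_of_all _ fun u => ?_))))
    · by_cases h : lam ⬝ᵥ u ≤ 0
      · simp [Set.indicator, h]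
      · have h' := (not_le.mp h).le
        simp [Set.indicator, h, min_eq_right h']
    · by_cases h : lam ⬝ᵥ u ≤ 0
      · simp [Set.indicator, h]
      · simp [Set.indicator, h]
  have e2 : ∀ u : Fin m → ℝ, (lam ⬝ᵥ u) * (u i * (B i ⬝ᵥ u)) * EE B σ u
      = σ ^ 2 * (((lam ⬝ᵥ u) + lam i * u i) * EE B σ u -
        ((lam ⬝ᵥ u) * (1 - u i * (B i ⬝ᵥ u) / σ ^ 2) * EE B σ u + lam i * u i * EE B σ u)) := by
    intro u
    field_simp
    ring
  simp only [e2]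
  have I4 : Integrable fun u : Fin m → ℝ =>
      (lam ⬝ᵥ u) * (1 - u i * (B i ⬝ᵥ u) / σ ^ 2) * EE B σ u + lam i * u i * EE B σ u := I1.add I3
  rw [integral_const_mul, integral_sub I2.integrableOn I4.integrableOn,
    integral_add I1.integrableOn I3.integrableOn, e1]
  ring

/-- Equation (A.4): for fixed `x, λ ∈ ℝᵐ`, the half-space `R = {y : λᵀ(y-x) ≤ 0}`,
`b_{ij}` the `(i,j)` entry of `A⁻¹`, `σ > 0` and any coordinate `i`,
`∫_R λᵀ(y-x) σ⁻³ Σ_j b_{ij}(y_i-x_i)(y_j-x_j) g(y|x,σ) dy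
  = σ⁻¹ ∫_R {λᵀ(y-x) + λ_i(y_i-x_i)} g(y|x,σ) dy`. -/
theorem eqn_A4 (m : ℕ) (A : Matrix (Fin m) (Fin m) ℝ) (hA : A.PosDef)
    (x lam : Fin m → ℝ) (σ : ℝ) (hσ : 0 < σ) (i : Fin m) :
    ∫ y in {y : Fin m → ℝ | lam ⬝ᵥ (y - x) ≤ 0},
        (lam ⬝ᵥ (y - x)) *
          (σ ^ (-3 : ℤ) * ∑ j : Fin m, A⁻¹ i j * (y i - x i) * (y j - x j)) *
          gaussDensity m A x y σ
      = σ⁻¹ * ∫ y in {y : Fin m → ℝ | lam ⬝ᵥ (y - x) ≤ 0},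
          ((lam ⬝ᵥ (y - x)) + lam i * (y i - x i)) * gaussDensity m A x y σ := by
  have hc := core2 A⁻¹ hA.inv σ hσ lam i
  have hS : MeasurableSet {u : Fin m → ℝ | lam ⬝ᵥ u ≤ 0} :=
    measurableSet_le (Continuous.measurable (by fun_prop)) measurable_const
  have tr : ∀ F : (Fin m → ℝ) → ℝ, ∫ y in {y : Fin m → ℝ | lam ⬝ᵥ (y - x) ≤ 0}, F (y - x)
      = ∫ u in {u : Fin m → ℝ | lam ⬝ᵥ u ≤ 0}, F u := by
    intro F
    have hS' : MeasurableSet {y : Fin m → ℝ | lam ⬝ᵥ (y - x) ≤ 0} :=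
      measurableSet_le (Continuous.measurable (by fun_prop)) measurable_const
    rw [← integral_indicator hS, ← integral_indicator hS',
      ← integral_sub_right_eq_self (Set.indicator {u : Fin m → ℝ | lam ⬝ᵥ u ≤ 0} F) x]
    rfl
  set K : ℝ := (2 * π * σ ^ 2) ^ (-(m : ℝ) / 2) * A.det ^ (-(1 : ℝ) / 2) with hK
  have t1 := tr fun u => (σ ^ (-3 : ℤ) * K) * ((lam ⬝ᵥ u) * (u i * (A⁻¹ i ⬝ᵥ u)) * EE A⁻¹ σ u)
  have t2 := tr fun u => K * (((lam ⬝ᵥ u) + lam i * u i) * EE A⁻¹ σ u)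
  rw [integral_const_mul (σ ^ (-3 : ℤ) * K) (fun u : Fin m → ℝ => (lam ⬝ᵥ u) * (u i * (A⁻¹ i ⬝ᵥ u)) * EE A⁻¹ σ u), hc] at t1
  rw [integral_const_mul K (fun u : Fin m → ℝ => ((lam ⬝ᵥ u) + lam i * u i) * EE A⁻¹ σ u)] at t2
  have s1 : ∀ y : Fin m → ℝ, (lam ⬝ᵥ (y - x)) *
          (σ ^ (-3 : ℤ) * ∑ j : Fin m, A⁻¹ i j * (y i - x i) * (y j - x j)) *
          gaussDensity m A x y σ = (σ ^ (-3 : ℤ) * K) * ((lam ⬝ᵥ (y - x)) *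
            ((y - x) i * (A⁻¹ i ⬝ᵥ (y - x))) * EE A⁻¹ σ (y - x)) := by
    intro y
    have : ∑ j : Fin m, A⁻¹ i j * (y i - x i) * (y j - x j)
        = (y - x) i * (A⁻¹ i ⬝ᵥ (y - x)) := by
      simp only [dotProduct, Finset.mul_sum, Pi.sub_apply]
      exact Finset.sum_congr rfl fun j _ => by ring
    rw [this]
    simp only [gaussDensity, EE, hK]
    ring
  have s2 : ∀ y : Fin m → ℝ, ((lam ⬝ᵥ (y - x)) + lam i * (y i - x i)) * gaussDensity m A x y σ
      = K * (((lam ⬝ᵥ (y - x)) + lam i * (y - x) i) * EE A⁻¹ σ (y - x)) := by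
    intro y
    simp only [gaussDensity, EE, hK, Pi.sub_apply]
    ring
  simp only [s1, s2]
  rw [t1, t2, _root_.zpow_neg]
  have : σ ^ (3:ℤ) = σ ^ 3 := by norm_cast
  rw [this]
  field_simp
end

section
/- Let x ∈ ℝ^m and λ ∈ ℝ^m be fixed vectors, let R = {y ∈ ℝ^m : λᵀ(y - x) ≤ 0}, and let σ > 0. Then ∫_R λᵀ(y - x) · σ^{-3}(y - x)ᵀA⁻¹(y - x) · g(y|x,σ) dy = (m + 1)·σ^{-1} ∫_R λᵀ(y - x) · g(y|x,σ) dy. -/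
open MeasureTheory Real Matrix

lemma hq_aux_int (m : ℕ) (b : ℝ) (hb : 0 < b) :
    Integrable (fun z : Fin m → ℝ => Real.exp (-b * ‖z‖ ^ 2)) := by
  have hd : 0 < b / ((m : ℝ) + 1) := by positivity
  have h1 : Integrable (fun z : Fin m → ℝ =>
      ∏ i, Real.exp (-(b / ((m : ℝ) + 1)) * z i ^ 2)) :=
    Integrable.fintype_prod (f := fun (_ : Fin m) (t : ℝ) =>
      Real.exp (-(b / ((m : ℝ) + 1)) * t ^ 2)) (fun _ => integrable_exp_neg_mul_sq hd)
  refine h1.mono' (by fun_prop) (Filter.Eventually.of_forall fun z => ?_)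
  rw [Real.norm_eq_abs, abs_of_pos (Real.exp_pos _), ← Real.exp_sum]
  apply Real.exp_le_exp.mpr
  rw [← Finset.mul_sum]
  have h2 : ∑ i, z i ^ 2 ≤ m * ‖z‖ ^ 2 := by
    calc ∑ i, z i ^ 2 ≤ ∑ _i : Fin m, ‖z‖ ^ 2 := by
          apply Finset.sum_le_sum
          intro i _
          rw [← sq_abs]
          exact pow_le_pow_left₀ (abs_nonneg _) (norm_le_pi_norm z i) 2
      _ = m * ‖z‖ ^ 2 := by simp
  have h3 : (b / ((m : ℝ) + 1)) * ∑ i, z i ^ 2 ≤ b * ‖z‖ ^ 2 := by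
    calc (b / ((m : ℝ) + 1)) * ∑ i, z i ^ 2 ≤ (b / ((m : ℝ) + 1)) * ((m + 1) * ‖z‖ ^ 2) := by
          gcongr; nlinarith [sq_nonneg ‖z‖]
      _ = b * ‖z‖ ^ 2 := by field_simp
  linarith

lemma hq_coercive (m : ℕ) (B : Matrix (Fin m) (Fin m) ℝ) (hB : B.PosDef) :
    ∃ k > 0, ∀ z : Fin m → ℝ, k * ‖z‖ ^ 2 ≤ z ⬝ᵥ B.mulVec z := by
  have hc : Continuous (fun z : Fin m → ℝ => z ⬝ᵥ B.mulVec z) := by fun_prop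
  have hpos : ∀ z : Fin m → ℝ, z ≠ 0 → 0 < z ⬝ᵥ B.mulVec z := by
    intro z hz
    simpa using hB.dotProduct_mulVec_pos hz
  rcases (Metric.sphere (0 : Fin m → ℝ) 1).eq_empty_or_nonempty with he | hne
  · refine ⟨1, one_pos, fun z => ?_⟩
    have hz : z = 0 := by
      by_contra hz
      have : (‖z‖⁻¹ • z) ∈ Metric.sphere (0 : Fin m → ℝ) 1 := by
        simp [norm_smul, hz]
      rw [he] at this
      exact this
    simp [hz]
  · obtain ⟨w, hw, hmin⟩ := (isCompact_sphere (0 : Fin m → ℝ) 1).exists_isMinOn hne hc.continuousOn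
    have hw0 : w ≠ 0 := by
      rintro rfl
      simp at hw
    refine ⟨_, hpos w hw0, fun z => ?_⟩
    by_cases hz : z = 0
    · simp [hz]
    have hn : ‖z‖ ≠ 0 := norm_ne_zero_iff.mpr hz
    have hs : (‖z‖⁻¹ • z) ∈ Metric.sphere (0 : Fin m → ℝ) 1 := by
      simp [norm_smul, hz]
    have h := isMinOn_iff.mp hmin _ hs
    simp only [mulVec_smul, dotProduct_smul, smul_dotProduct, smul_eq_mul] at h
    calc _ ≤ (‖z‖⁻¹ * (‖z‖⁻¹ * (z ⬝ᵥ B.mulVec z))) * ‖z‖ ^ 2 := by gcongr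
      _ = _ := by field_simp

lemma hq_main (m : ℕ) (p q : (Fin m → ℝ) → ℝ) (hp : Continuous p) (hq : Continuous q)
    (hps : ∀ s : ℝ, 0 < s → ∀ z, p (s • z) = s * p z)
    (hqs : ∀ s : ℝ, 0 < s → ∀ z, q (s • z) = s ^ 2 * q z)
    (L k : ℝ) (hL : 0 ≤ L) (hk : 0 < k) (hpL : ∀ z, |p z| ≤ L * ‖z‖)
    (hqk : ∀ z, k * ‖z‖ ^ 2 ≤ q z) (c : ℝ) (hc : 0 < c) :
    2 * c * ∫ z, p z * q z * Real.exp (-c * q z) =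
      ((m : ℝ) + 1) * ∫ z, p z * Real.exp (-c * q z) := by
  have hq0 : ∀ z, 0 ≤ q z := fun z => le_trans (by positivity) (hqk z)
  have hbase : Integrable (fun z : Fin m → ℝ => Real.exp (-(c / 8 * k) * ‖z‖ ^ 2)) :=
    hq_aux_int m _ (by positivity)
  -- polynomial bounds
  have hpoly : ∀ z, |p z| ≤ L * (1 + q z / k) := by
    intro z
    refine (hpL z).trans ?_
    gcongr
    have : ‖z‖ ^ 2 ≤ q z / k := by
      rw [le_div_iff₀ hk]; linarith [hqk z]
    nlinarith [sq_nonneg (‖z‖ - 1)]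
  have hexp : ∀ z, Real.exp (-(c / 8) * q z) ≤ Real.exp (-(c / 8 * k) * ‖z‖ ^ 2) := by
    intro z
    apply Real.exp_le_exp.mpr
    have := mul_le_mul_of_nonneg_left (hqk z) (by positivity : 0 ≤ c / 8)
    linarith
  obtain ⟨M, hM0, hM⟩ : ∃ M : ℝ, 0 ≤ M ∧ ∀ z, |p z| * (1 + q z) * Real.exp (-(c / 4) * q z)
      ≤ M * Real.exp (-(c / 8 * k) * ‖z‖ ^ 2) := by
    refine ⟨L * (1 + (1 + 1 / k) * (8 / c) + 2 * (1 / k) * (8 / c) ^ 2), by positivity, fun z => ?_⟩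
    have hu := Real.quadratic_le_exp_of_nonneg (x := c / 8 * q z) (by have := hq0 z; positivity)
    set u := c / 8 * q z with hu'
    have hu0 : 0 ≤ u := by have := hq0 z; positivity
    have hqu : q z = 8 / c * u := by rw [hu']; field_simp
    have e1 : Real.exp (-(c / 4) * q z) = Real.exp (-u) * Real.exp (-(c / 8) * q z) := by
      rw [← Real.exp_add]; congr 1; rw [hu']; ring
    have h1 : |p z| * (1 + q z) ≤
        L * (1 + (1 + 1 / k) * (8 / c) + 2 * (1 / k) * (8 / c) ^ 2) * Real.exp u := by
      calc |p z| * (1 + q z) ≤ L * (1 + q z / k) * (1 + q z) := by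
            have := hq0 z
            gcongr
            exact hpoly z
        _ = L * (1 * 1 + (1 + 1 / k) * (8 / c) * u + 2 * (1 / k) * (8 / c) ^ 2 * (u ^ 2 / 2)) := by
            rw [hqu]; ring
        _ ≤ L * (1 * Real.exp u + (1 + 1 / k) * (8 / c) * Real.exp u
              + 2 * (1 / k) * (8 / c) ^ 2 * Real.exp u) := by
            have := sq_nonneg u
            gcongr <;> linarith
        _ = _ := by ring
    calc |p z| * (1 + q z) * Real.exp (-(c / 4) * q z)
        ≤ (L * (1 + (1 + 1 / k) * (8 / c) + 2 * (1 / k) * (8 / c) ^ 2) * Real.exp u) *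
          (Real.exp (-u) * Real.exp (-(c / 8) * q z)) := by
          rw [e1]; gcongr
      _ = L * (1 + (1 + 1 / k) * (8 / c) + 2 * (1 / k) * (8 / c) ^ 2) *
          Real.exp (-(c / 8) * q z) := by
          have : Real.exp u * Real.exp (-u) = 1 := by rw [← Real.exp_add]; simp
          linear_combination (L * (1 + (1 + 1 / k) * (8 / c) + 2 * (1 / k) * (8 / c) ^ 2) *
            Real.exp (-(c / 8) * q z)) * this
      _ ≤ _ := by exact mul_le_mul_of_nonneg_left (hexp z) (by positivity)
  have hbd : Integrable (fun z : Fin m → ℝ =>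
      |p z| * (1 + q z) * Real.exp (-(c / 4) * q z)) := by
    refine (hbase.const_mul M).mono' (by fun_prop) (Filter.Eventually.of_forall fun z => ?_)
    rw [Real.norm_eq_abs, abs_of_nonneg (by have := hq0 z; positivity)]
    exact hM z
  let F : ℝ → ℝ := fun s => ∫ z, p z * Real.exp (-c * (s ^ 2 * q z))
  have hder : HasDerivAt F
      (∫ z, p z * (Real.exp (-c * ((1:ℝ) ^ 2 * q z)) * (-c * (2 * (1:ℝ) * q z)))) 1 := by
    refine (hasDerivAt_integral_of_dominated_loc_of_deriv_le
      (F := fun s z => p z * Real.exp (-c * (s ^ 2 * q z)))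
      (F' := fun s z => p z * (Real.exp (-c * (s ^ 2 * q z)) * (-c * (2 * s * q z))))
      (bound := fun z => (3 * c) * (|p z| * (1 + q z) * Real.exp (-(c / 4) * q z)))
      (Metric.ball_mem_nhds (1:ℝ) (by norm_num : (0:ℝ) < 1/2)) ?_ ?_ ?_ ?_ ?_ ?_).2
    · exact Filter.Eventually.of_forall fun s => by fun_prop
    · refine hbd.mono' (by fun_prop) (Filter.Eventually.of_forall fun z => ?_)
      have := hq0 z
      rw [norm_mul, Real.norm_eq_abs, Real.norm_eq_abs, abs_of_pos (Real.exp_pos _)]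
      have h2 : Real.exp (-c * ((1:ℝ) ^ 2 * q z)) ≤ Real.exp (-(c / 4) * q z) := by
        apply Real.exp_le_exp.mpr
        nlinarith [mul_nonneg hc.le this]
      calc _ ≤ |p z| * 1 * Real.exp (-(c / 4) * q z) := by rw [mul_one]; gcongr
        _ ≤ _ := by gcongr; linarith
    · fun_prop
    · refine Filter.Eventually.of_forall fun z s hs => ?_
      have hqz := hq0 z
      rw [Metric.mem_ball, Real.dist_eq, abs_lt] at hs
      have hs1 : 1 / 2 ≤ s := by linarith [hs.1]
      have hs2 : s ≤ 3 / 2 := by linarith [hs.2]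
      have h2 : Real.exp (-c * (s ^ 2 * q z)) ≤ Real.exp (-(c / 4) * q z) := by
        apply Real.exp_le_exp.mpr
        have : 1 / 4 ≤ s ^ 2 := by nlinarith
        nlinarith [mul_le_mul_of_nonneg_right this (mul_nonneg hc.le hqz)]
      have h3 : |(-c * (2 * s * q z))| ≤ 3 * c * (1 + q z) := by
        rw [abs_le]
        have hsq : s * q z ≤ 3 / 2 * q z := by gcongr
        have hsq0 : 0 ≤ s * q z := by have : 0 ≤ s := by linarith
                                      positivity
        constructor <;> nlinarith [mul_le_mul_of_nonneg_left hsq hc.le, mul_nonneg hc.le hsq0,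
          mul_nonneg hc.le hqz]
      simp only [norm_mul (p z), Real.norm_eq_abs, abs_mul (Real.exp _),
        abs_of_pos (Real.exp_pos _)]
      calc _ ≤ |p z| * (Real.exp (-(c / 4) * q z) * (3 * c * (1 + q z))) := by gcongr
        _ = _ := by ring
    · exact hbd.const_mul _
    · refine Filter.Eventually.of_forall fun z s _ => ?_
      have h1 : HasDerivAt (fun s : ℝ => -c * (s ^ 2 * q z)) (-c * (2 * s * q z)) s := by
        have := (((hasDerivAt_id s).pow 2).mul_const (q z)).const_mul (-c)
        simpa using this
      exact (h1.exp).const_mul (p z)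
  have hscale : ∀ s : ℝ, 0 < s → s ^ (m + 1) * F s = F 1 := by
    intro s hs
    have h := Measure.integral_comp_smul (volume : Measure (Fin m → ℝ))
      (fun z => p z * Real.exp (-c * q z)) s
    simp only [hps s hs, hqs s hs, Module.finrank_fin_fun, smul_eq_mul, mul_assoc s] at h
    rw [integral_const_mul, abs_of_pos (by positivity)] at h
    have h1 : F 1 = ∫ z, p z * Real.exp (-c * q z) := by simp [F]
    have h2 : s * F s = (s ^ m)⁻¹ * F 1 := by rw [h1]; exact h
    calc s ^ (m + 1) * F s = s ^ m * (s * F s) := by ring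
      _ = F 1 := by rw [h2]; field_simp
  have hprod := (hasDerivAt_pow (m + 1) (1:ℝ)).mul hder
  have hconst : HasDerivAt ((fun s : ℝ => s ^ (m + 1)) * F) 0 1 := by
    refine (hasDerivAt_const (1:ℝ) (F 1)).congr_of_eventuallyEq ?_
    filter_upwards [lt_mem_nhds (zero_lt_one : (0:ℝ) < 1)] with s hs
    exact hscale s hs
  have key := hprod.unique hconst
  have h1 : F 1 = ∫ z, p z * Real.exp (-c * q z) := by simp [F]
  have h2 : (∫ z, p z * (Real.exp (-c * ((1:ℝ) ^ 2 * q z)) * (-c * (2 * (1:ℝ) * q z)))) =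
      -(2 * c) * ∫ z, p z * q z * Real.exp (-c * q z) := by
    rw [← integral_const_mul]
    congr 1; ext z
    simp only [one_pow, one_mul, mul_one]; ring
  rw [h2, h1] at key
  simp only [one_pow, one_mul, mul_one] at key
  push_cast at key
  linarith

/-- For fixed `x, λ ∈ ℝᵐ`, the half-space `R = {y : λᵀ(y-x) ≤ 0}` and `σ > 0`,
`∫_R λᵀ(y-x) σ⁻³ (y-x)ᵀA⁻¹(y-x) g(y|x,σ) dy = (m+1) σ⁻¹ ∫_R λᵀ(y-x) g(y|x,σ) dy`. -/
theorem halfspace_quadratic (m : ℕ) (A : Matrix (Fin m) (Fin m) ℝ) (hA : A.PosDef)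
    (x lam : Fin m → ℝ) (σ : ℝ) (hσ : 0 < σ) :
    ∫ y in {y : Fin m → ℝ | lam ⬝ᵥ (y - x) ≤ 0},
        (lam ⬝ᵥ (y - x)) * (σ ^ (-3 : ℤ) * ((y - x) ⬝ᵥ (A⁻¹).mulVec (y - x))) *
          gaussDensity m A x y σ
      = ((m : ℝ) + 1) * σ⁻¹ *
          ∫ y in {y : Fin m → ℝ | lam ⬝ᵥ (y - x) ≤ 0},
            (lam ⬝ᵥ (y - x)) * gaussDensity m A x y σ := by
  let q : (Fin m → ℝ) → ℝ := fun z => z ⬝ᵥ (A⁻¹).mulVec z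
  let p : (Fin m → ℝ) → ℝ := fun z => min (lam ⬝ᵥ z) 0
  let C : ℝ := (2 * π * σ ^ 2) ^ (-(m : ℝ) / 2) * A.det ^ (-(1 : ℝ) / 2)
  let c : ℝ := 1 / (2 * σ ^ 2)
  have hS : MeasurableSet {y : Fin m → ℝ | lam ⬝ᵥ (y - x) ≤ 0} :=
    (isClosed_le (by fun_prop) continuous_const).measurableSet
  obtain ⟨k, hk, hqk⟩ := hq_coercive m A⁻¹ hA.inv
  have main := hq_main m p q (by fun_prop) (by fun_prop)
    (by
      intro s hs z
      simp only [p, dotProduct_smul, smul_eq_mul]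
      rw [mul_min_of_nonneg _ _ hs.le, mul_zero])
    (by
      intro s hs z
      simp only [q, mulVec_smul, dotProduct_smul, smul_dotProduct, smul_eq_mul]
      ring)
    (∑ i, |lam i|) k (Finset.sum_nonneg fun _ _ => abs_nonneg _) hk
    (by
      intro z
      have h1 : |p z| ≤ |lam ⬝ᵥ z| := by
        simp only [p]
        rcases le_total (lam ⬝ᵥ z) 0 with h | h
        · rw [min_eq_left h]
        · rw [min_eq_right h]; simp
      refine h1.trans ?_
      rw [Finset.sum_mul]
      refine (Finset.abs_sum_le_sum_abs _ _).trans (Finset.sum_le_sum fun i _ => ?_)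
      rw [abs_mul]
      gcongr
      exact norm_le_pi_norm z i)
    hqk c (by positivity)
  have e1 : (∫ y in {y : Fin m → ℝ | lam ⬝ᵥ (y - x) ≤ 0},
        (lam ⬝ᵥ (y - x)) * (σ ^ (-3 : ℤ) * ((y - x) ⬝ᵥ (A⁻¹).mulVec (y - x))) *
          gaussDensity m A x y σ) =
      σ ^ (-3 : ℤ) * C * ∫ z, p z * q z * Real.exp (-c * q z) := by
    rw [← integral_indicator hS, ← integral_const_mul,
      ← integral_sub_right_eq_self (fun z => σ ^ (-3 : ℤ) * C * (p z * q z * Real.exp (-c * q z))) x]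
    congr 1; ext y
    have hx : -((y - x) ⬝ᵥ (A⁻¹).mulVec (y - x)) / (2 * σ ^ 2) = -c * q (y - x) := by
      simp only [c, q]; ring
    by_cases h : lam ⬝ᵥ (y - x) ≤ 0
    · rw [Set.indicator_of_mem (by exact h)]
      simp only [gaussDensity, hx]
      simp only [p, min_eq_left h, C, q]
      ring
    · rw [Set.indicator_of_notMem (by exact h)]
      simp only [p, min_eq_right (not_le.mp h).le]
      ring
  have e2 : (∫ y in {y : Fin m → ℝ | lam ⬝ᵥ (y - x) ≤ 0},
        (lam ⬝ᵥ (y - x)) * gaussDensity m A x y σ) =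
      C * ∫ z, p z * Real.exp (-c * q z) := by
    rw [← integral_indicator hS, ← integral_const_mul,
      ← integral_sub_right_eq_self (fun z => C * (p z * Real.exp (-c * q z))) x]
    congr 1; ext y
    have hx : -((y - x) ⬝ᵥ (A⁻¹).mulVec (y - x)) / (2 * σ ^ 2) = -c * q (y - x) := by
      simp only [c, q]; ring
    by_cases h : lam ⬝ᵥ (y - x) ≤ 0
    · rw [Set.indicator_of_mem (by exact h)]
      simp only [gaussDensity, hx]
      simp only [p, min_eq_left h, C]
      ring
    · rw [Set.indicator_of_notMem (by exact h)]
      simp only [p, min_eq_right (not_le.mp h).le]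
      ring
  rw [e1, e2]
  have h3 : σ ^ (-3 : ℤ) = σ⁻¹ * (2 * c) := by
    simp only [c]
    rw [_root_.zpow_neg]
    norm_cast
    field_simp
  rw [h3]
  linear_combination (σ⁻¹ * C) * main
end
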